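/- Let 2 ≤ q ≤ p < ∞ and s ≥ 0. There exists C > 0, depending only on φ, Φ, p, q, s, such that for every admissible finite collection 𝓘 = {[a_m,b_m]}_{m=1}^N and every Schwartz function f, one has ‖ ( Σ_{j∈ℤ} 2^{jsq} ( Σ_{m=1}^N |((f∗φ_m)∗ψ_j)(x)|² )^{q/2} )^{1/q} ‖_{L^p(dx)} ≤ C ‖ ( Σ_{j∈ℤ} (2^{js} |(f∗ψ_j)(x)|)^q )^{1/q} ‖_{L^p(dx)}. This is the uniform boundedness of the Rubio de Francia family WITHOUT rotations on the homogeneous Triebel–Lizorkin space Ḟ^s_{pq}. -/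

import Mathlib

open MeasureTheory Real Set Function
open scoped FourierTransform ENNReal NNReal

/-- `e2pi t = e^{2πit}`. -/
noncomputable def e2pi (t : ℝ) : ℂ := Complex.exp (2 * (Real.pi : ℂ) * Complex.I * (t : ℂ))

/-- Convolution of two functions on `ℝ`. -/
noncomputable def conv (f g : ℝ → ℂ) (x : ℝ) : ℂ := ∫ t, f t * g (x - t)

/-- The function `φ_m` associated with the interval `[a,b]`: its Fourier transform is
`ξ ↦ 𝓕φ ((ξ - a)/(b - a))`; in space variables it is `x ↦ (b-a) e^{2πiax} φ((b-a)x)`. -/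
noncomputable def phim (φ : ℝ → ℂ) (a b : ℝ) (x : ℝ) : ℂ :=
  ((b - a : ℝ) : ℂ) * e2pi (a * x) * φ ((b - a) * x)

/-- A finite collection of compact intervals `[a m, b m]` is admissible if the intervals are
nondegenerate, pairwise disjoint, and none of them contains `0` in its interior. -/
def Admissible {N : ℕ} (a b : Fin N → ℝ) : Prop :=
  (∀ m, a m < b m) ∧ (∀ m, (0 : ℝ) ∉ Set.Ioo (a m) (b m)) ∧
    ∀ m m', m ≠ m' → Disjoint (Set.Icc (a m) (b m)) (Set.Icc (a m') (b m'))

/-- The rotated Rubio de Francia piece `g_m(x) = e^{-2πi a x} (f ∗ φ_m)(x)`. -/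
noncomputable def rotConv (φ : ℝ → ℂ) (a b : ℝ) (f : ℝ → ℂ) (x : ℝ) : ℂ :=
  e2pi (-(a * x)) * conv f (phim φ a b) x

/-- Littlewood–Paley block `ψ_j`, whose Fourier transform is `ξ ↦ 𝓕Φ(2^{-j}ξ) - 𝓕Φ(2^{-j+1}ξ)`. -/
noncomputable def psi (Φ : ℝ → ℂ) (j : ℤ) (x : ℝ) : ℂ :=
  (((2:ℝ) ^ j : ℝ) : ℂ) * Φ ((2:ℝ) ^ j * x) - (((2:ℝ) ^ (j-1) : ℝ) : ℂ) * Φ ((2:ℝ) ^ (j-1) * x)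

/-- Uncentered Hardy–Littlewood maximal function on `ℝ`. -/
noncomputable def MF (h : ℝ → ℝ≥0∞) (x : ℝ) : ℝ≥0∞ :=
  ⨆ (c : ℝ) (r : ℝ) (_ : 0 < r) (_ : x ∈ Metric.ball c r),
    (∫⁻ t in Metric.ball c r, h t) / ENNReal.ofReal (2 * r)

lemma lt_MF_iff {h : ℝ → ℝ≥0∞} {x : ℝ} {l : ℝ≥0∞} :
    l < MF h x ↔ ∃ c r : ℝ, 0 < r ∧ x ∈ Metric.ball c r ∧
      l < (∫⁻ t in Metric.ball c r, h t) / ENNReal.ofReal (2 * r) := by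
  simp only [MF, lt_iSup_iff, exists_prop]

lemma lt_avg_iff {A l : ℝ≥0∞} {r : ℝ} (hr : 0 < r) :
    l < A / ENNReal.ofReal (2 * r) ↔ l * ENNReal.ofReal (2 * r) < A := by
  have h1 : ENNReal.ofReal (2 * r) ≠ 0 := by simp [hr]
  exact ENNReal.lt_div_iff_mul_lt (Or.inl h1) (Or.inl ENNReal.ofReal_ne_top)

lemma isOpen_MF (h : ℝ → ℝ≥0∞) (l : ℝ≥0∞) : IsOpen {x | l < MF h x} := by
  rw [isOpen_iff_mem_nhds]
  intro x hx
  obtain ⟨c, r, hr, hxc, hl⟩ := lt_MF_iff.1 hx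
  filter_upwards [Metric.isOpen_ball.mem_nhds hxc] with y hy
  exact lt_MF_iff.2 ⟨c, r, hr, hy, hl⟩

lemma measurable_MF (h : ℝ → ℝ≥0∞) : Measurable (MF h) :=
  measurable_of_Ioi fun l => (isOpen_MF h l).measurableSet

lemma lintegral_ball_le_MF (h : ℝ → ℝ≥0∞) {x c r : ℝ} (hx : x ∈ Metric.ball c r) :
    ∫⁻ t in Metric.ball c r, h t ≤ ENNReal.ofReal (2 * r) * MF h x := by
  have hr : 0 < r := Metric.pos_of_mem_ball hx
  have h1 : (∫⁻ t in Metric.ball c r, h t) / ENNReal.ofReal (2 * r) ≤ MF h x := by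
    unfold MF
    exact le_iSup_of_le c (le_iSup_of_le r (le_iSup_of_le hr (le_iSup_of_le hx le_rfl)))
  rwa [ENNReal.div_le_iff' (by simp [hr]) ENNReal.ofReal_ne_top] at h1

lemma MF_le_of_le {h : ℝ → ℝ≥0∞} {B : ℝ≥0∞} (hB : ∀ x, h x ≤ B) (x : ℝ) : MF h x ≤ B := by
  unfold MF
  refine iSup_le fun c => iSup_le fun r => iSup_le fun hr => iSup_le fun _ => ?_
  refine ENNReal.div_le_of_le_mul ?_
  calc ∫⁻ t in Metric.ball c r, h t ≤ ∫⁻ t in Metric.ball c r, B := lintegral_mono fun t => hB t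
    _ = B * ENNReal.ofReal (2 * r) := by simp [Real.volume_ball]

lemma le_MF {h : ℝ → ℝ≥0∞} (hc : Continuous h) (x : ℝ) : h x ≤ MF h x := by
  refine le_of_forall_lt fun l hl => ?_
  obtain ⟨l', hl', hl'2⟩ := exists_between hl
  have : {y | l' < h y} ∈ nhds x := (isOpen_lt continuous_const hc).mem_nhds hl'2
  obtain ⟨r, hr, hsub⟩ := Metric.mem_nhds_iff.1 this
  refine lt_MF_iff.2 ⟨x, r, hr, Metric.mem_ball_self hr, lt_of_lt_of_le hl' ?_⟩
  rw [ENNReal.le_div_iff_mul_le (Or.inl (by simp [hr])) (Or.inl ENNReal.ofReal_ne_top)]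
  calc l' * ENNReal.ofReal (2 * r) = ∫⁻ t in Metric.ball x r, l' := by simp [Real.volume_ball]
    _ ≤ _ := setLIntegral_mono' measurableSet_ball fun y hy => (hsub hy).le

lemma MF_weak (h : ℝ → ℝ≥0∞) {l : ℝ≥0∞} (hl : l ≠ 0) (hl' : l ≠ ∞) :
    volume {x | l < MF h x} ≤ 4 / l * ∫⁻ t, h t := by
  by_cases hI : ∫⁻ t, h t = ∞
  · rw [hI, ENNReal.mul_top]
    · exact le_top
    · simp [hl']
  let t : Set (ℝ × ℝ) := {a | 0 < a.2 ∧ l * ENNReal.ofReal (2 * a.2) < ∫⁻ t in Metric.ball a.1 a.2, h t}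
  have hR : ∀ a ∈ t, a.2 ≤ ((∫⁻ t, h t) / l).toReal := by
    intro a ha
    have h1 : l * ENNReal.ofReal (2 * a.2) ≤ ∫⁻ t, h t := ha.2.le.trans (setLIntegral_le_lintegral _ _)
    have h2 : ENNReal.ofReal (2 * a.2) ≤ (∫⁻ t, h t) / l := by
      rw [ENNReal.le_div_iff_mul_le (Or.inl hl) (Or.inl hl'), mul_comm]; exact h1
    have h3 := (ENNReal.ofReal_le_iff_le_toReal (ENNReal.div_ne_top hI hl)).1 h2
    linarith [ha.1]
  obtain ⟨u, hut, hdisj, hcov⟩ := Vitali.exists_disjoint_subfamily_covering_enlargement_ball t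
    (fun a => a.1) (fun a => a.2) _ hR 4 (by norm_num)
  have hucount : u.Countable := by
    refine hdisj.countable_of_isOpen (fun a _ => Metric.isOpen_ball) (fun a ha => ?_)
    exact ⟨a.1, Metric.mem_ball_self (hut ha).1⟩
  have hsub : {x | l < MF h x} ⊆ ⋃ a ∈ u, Metric.ball a.1 (4 * a.2) := by
    intro x hx
    obtain ⟨c, r, hr, hxc, hlt⟩ := lt_MF_iff.1 hx
    obtain ⟨b, hb, hbs⟩ := hcov (c, r) ⟨hr, (lt_avg_iff hr).1 hlt⟩
    exact mem_biUnion hb (hbs hxc)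
  calc volume {x | l < MF h x} ≤ volume (⋃ a ∈ u, Metric.ball a.1 (4 * a.2)) := measure_mono hsub
    _ ≤ ∑' a : u, volume (Metric.ball a.1.1 (4 * a.1.2)) := measure_biUnion_le _ hucount _
    _ ≤ ∑' a : u, 4 / l * ∫⁻ t in Metric.ball a.1.1 a.1.2, h t := by
        refine ENNReal.tsum_le_tsum fun a => ?_
        have ha := hut a.2
        rw [Real.volume_ball]
        have : ENNReal.ofReal (2 * (4 * a.1.2)) = 4 / l * (l * ENNReal.ofReal (2 * a.1.2)) := by
          rw [← mul_assoc (4 / l), ENNReal.div_mul_cancel hl hl', show 2 * (4 * a.1.2) = 4 * (2 * a.1.2) by ring,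
            ENNReal.ofReal_mul (by norm_num)]
          simp
        rw [this]
        exact mul_le_mul_right ha.2.le _
    _ = 4 / l * ∑' a : u, ∫⁻ t in Metric.ball a.1.1 a.1.2, h t := ENNReal.tsum_mul_left
    _ = 4 / l * ∫⁻ t in ⋃ a ∈ u, Metric.ball a.1 a.2, h t := by
        rw [lintegral_biUnion hucount (fun a _ => measurableSet_ball) hdisj]
    _ ≤ _ := mul_le_mul_right (setLIntegral_le_lintegral _ _) _

lemma MF_weak2 {h : ℝ → ℝ≥0∞} (hm : Measurable h) {l : ℝ≥0∞} (hl : l ≠ 0) (hl' : l ≠ ∞) :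
    volume {x | l < MF h x} ≤ 8 / l * ∫⁻ t in {t | l < 2 * h t}, h t := by
  have hS : MeasurableSet {t | l < 2 * h t} := measurableSet_lt measurable_const (hm.const_mul 2)
  have hsub : {x | l < MF h x} ⊆ {x | l / 2 < MF ({t | l < 2 * h t}.indicator h) x} := by
    intro x hx
    obtain ⟨c, r, hr, hxc, hlt⟩ := lt_MF_iff.1 hx
    refine lt_MF_iff.2 ⟨c, r, hr, hxc, ?_⟩
    rw [lt_avg_iff hr] at hlt ⊢
    have h1 : ∫⁻ t in Metric.ball c r, h t ≤
        (∫⁻ t in Metric.ball c r, {t | l < 2 * h t}.indicator h t) + l / 2 * ENNReal.ofReal (2 * r) := by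
      calc ∫⁻ t in Metric.ball c r, h t
          ≤ ∫⁻ t in Metric.ball c r, ({t | l < 2 * h t}.indicator h t + l / 2) := by
            refine lintegral_mono fun t => ?_
            by_cases ht : l < 2 * h t
            · rw [indicator_of_mem (by exact ht)]; exact le_self_add
            · rw [indicator_of_notMem (by exact ht), zero_add]
              rw [ENNReal.le_div_iff_mul_le (by simp) (by simp), mul_comm]
              exact not_lt.1 ht
        _ = _ := by
            rw [lintegral_add_right _ measurable_const]
            simp [Real.volume_ball]
    have h2 : l * ENNReal.ofReal (2 * r) = l / 2 * ENNReal.ofReal (2 * r) + l / 2 * ENNReal.ofReal (2 * r) := by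
      rw [← add_mul, ENNReal.add_halves]
    rw [h2] at hlt
    have h3 := hlt.trans_le h1
    exact (ENNReal.add_lt_add_iff_right (ENNReal.mul_ne_top (ENNReal.div_ne_top hl' (by simp)) ENNReal.ofReal_ne_top)).1 h3
  refine (measure_mono hsub).trans ((MF_weak _ (by simp [hl]) (ENNReal.div_ne_top hl' (by simp))).trans_eq ?_)
  rw [lintegral_indicator hS]
  congr 1
  rw [div_eq_mul_inv, div_eq_mul_inv, div_eq_mul_inv, ENNReal.mul_inv (by simp) (by simp), inv_inv,
    mul_comm l⁻¹, ← mul_assoc]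
  norm_num

lemma layercake_enn (μ : Measure ℝ) {f : ℝ → ℝ≥0∞} (hf : Measurable f) (hfin : ∀ x, f x ≠ ∞) {r : ℝ}
    (hr : 0 < r) : ∫⁻ x, f x ^ r ∂μ =
      ENNReal.ofReal r * ∫⁻ t in Ioi (0:ℝ), μ {x | ENNReal.ofReal t < f x} * ENNReal.ofReal (t ^ (r - 1)) := by
  have h := lintegral_rpow_eq_lintegral_meas_lt_mul μ (f := fun x => (f x).toReal)
    (Filter.Eventually.of_forall fun x => ENNReal.toReal_nonneg) hf.ennreal_toReal.aemeasurable hr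
  have h1 : ∫⁻ x, f x ^ r ∂μ = ∫⁻ x, ENNReal.ofReal ((f x).toReal ^ r) ∂μ := by
    refine lintegral_congr fun x => ?_
    rw [← ENNReal.ofReal_rpow_of_nonneg ENNReal.toReal_nonneg hr.le, ENNReal.ofReal_toReal (hfin x)]
  rw [h1, h]
  congr 1
  refine setLIntegral_congr_fun measurableSet_Ioi fun t ht => ?_
  congr 2
  ext x
  simp only [mem_ofPred_eq]
  rw [ENNReal.ofReal_lt_iff_lt_toReal (le_of_lt ht) (hfin x)]

lemma MF_strong {r : ℝ} (hr : 1 < r) : ∃ C : ℝ≥0∞, C ≠ ∞ ∧ ∀ h : ℝ → ℝ≥0∞, Measurable h →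
    (∃ B : ℝ≥0∞, B ≠ ∞ ∧ ∀ x, h x ≤ B) → ∫⁻ x, MF h x ^ r ≤ C * ∫⁻ x, h x ^ r := by
  refine ⟨ENNReal.ofReal r * (8 * ((ENNReal.ofReal (r - 1))⁻¹ * 2 ^ (r - 1))), ?_, ?_⟩
  · refine ENNReal.mul_ne_top ENNReal.ofReal_ne_top (ENNReal.mul_ne_top (by simp) (ENNReal.mul_ne_top ?_ ?_))
    · simp [hr]
    · exact ENNReal.rpow_ne_top_of_nonneg (by linarith) (by simp)
  rintro h hm ⟨B, hB, hhB⟩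
  have hhfin : ∀ x, h x ≠ ∞ := fun x => ne_top_of_le_ne_top hB (hhB x)
  rw [layercake_enn volume (measurable_MF h) (fun x => ne_top_of_le_ne_top hB (MF_le_of_le hhB x)) (by linarith),
    mul_assoc, mul_assoc]
  refine mul_le_mul_right ?_ _
  have key := layercake_enn (volume.withDensity h) (f := fun x => 2 * h x) (hm.const_mul 2)
    (fun x => ENNReal.mul_ne_top (by simp) (hhfin x)) (r := r - 1) (by linarith)
  have e1 : ∫⁻ x, (2 * h x) ^ (r - 1) ∂(volume.withDensity h) = 2 ^ (r - 1) * ∫⁻ x, h x ^ r := by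
    rw [lintegral_withDensity_eq_lintegral_mul _ hm ((hm.const_mul 2).pow_const _),
      ← lintegral_const_mul _ (hm.pow_const r)]
    refine lintegral_congr fun x => ?_
    simp only [Pi.mul_apply]
    rw [ENNReal.mul_rpow_of_nonneg _ _ (by linarith : (0:ℝ) ≤ r - 1), mul_left_comm]
    congr 1
    by_cases h0 : h x = 0
    · simp [h0, ENNReal.zero_rpow_of_pos (by linarith : 0 < r)]
    · conv_rhs => rw [show r = 1 + (r - 1) by ring, ENNReal.rpow_add _ _ h0 (hhfin x), ENNReal.rpow_one]
  have e2 : (ENNReal.ofReal (r - 1))⁻¹ * 2 ^ (r - 1) * ∫⁻ x, h x ^ r =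
      ∫⁻ t in Ioi (0:ℝ), (volume.withDensity h) {x | ENNReal.ofReal t < 2 * h x} * ENNReal.ofReal (t ^ (r - 1 - 1)) := by
    rw [mul_assoc, ← e1, key, ← mul_assoc, ENNReal.inv_mul_cancel (by simp [hr]) ENNReal.ofReal_ne_top, one_mul]
  rw [e2, ← lintegral_const_mul' _ _ (by simp)]
  refine setLIntegral_mono' measurableSet_Ioi fun t ht => ?_
  have ht0 : 0 < t := ht
  rw [withDensity_apply _ (measurableSet_lt measurable_const (hm.const_mul 2))]
  have hw := MF_weak2 hm (l := ENNReal.ofReal t) (by simp [ht0]) ENNReal.ofReal_ne_top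
  calc _ ≤ (8 / ENNReal.ofReal t * ∫⁻ t_1 in {t_1 | ENNReal.ofReal t < 2 * h t_1}, h t_1) * ENNReal.ofReal (t ^ (r - 1)) :=
        mul_le_mul_left hw _
    _ = _ := by
        rw [show t ^ (r - 1) = t * t ^ (r - 1 - 1) by
          rw [← Real.rpow_one_add' ht0.le (by linarith)]; ring_nf, ENNReal.ofReal_mul ht0.le]
        have : ENNReal.ofReal t ≠ 0 := by simp [ht0]
        calc _ = (8 / ENNReal.ofReal t * ENNReal.ofReal t) *
              ((∫⁻ t_1 in {t_1 | ENNReal.ofReal t < 2 * h t_1}, h t_1) * ENNReal.ofReal (t ^ (r - 1 - 1))) := by ring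
          _ = _ := by rw [ENNReal.div_mul_cancel this ENNReal.ofReal_ne_top]

/-- Hypothesis of the good-λ theorem. -/
def GLHyp (A : ℝ≥0) (v h : ℝ → ℝ≥0∞) : Prop :=
  ∀ x d : ℝ, 0 < d → ∃ v1 : ℝ → ℝ≥0∞, Measurable v1 ∧ ∫⁻ t, v1 t ≤ A * ENNReal.ofReal d * MF h x ∧
    ∀ y ∈ Metric.ball x d, ∀ y' ∈ Metric.ball x d, v y ≤ A * (v1 y + v1 y' + v y' + MF h x)

lemma good_lambda_local {A : ℝ≥0} {v h : ℝ → ℝ≥0∞} (hH : GLHyp A v h) {l : ℝ≥0∞} (hl : l ≠ 0) (hl' : l ≠ ∞)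
    {g : ℝ≥0∞} (hg : g ≤ 1) (x d z : ℝ) (hd : 0 < d) (hz : dist x z = d) (hzO : MF v z ≤ l)
    (hx : MF h x ≤ g * l) :
    volume ({y | (8 + A * (A + 4)) * l < MF v y} ∩ Metric.closedBall x (d / 2)) ≤ 4 * A * g * ENNReal.ofReal d := by
  obtain ⟨v1, hv1m, hv1, hv⟩ := hH x d hd
  have hMl : MF h x ≤ l := hx.trans (by simpa using mul_le_mul_left hg l)
  have hv1' : ∫⁻ t, v1 t ≤ A * ENNReal.ofReal d * (g * l) := hv1.trans (mul_le_mul_right hx _)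
  have hd0 : ENNReal.ofReal d ≠ 0 := by simp [hd]
  -- pointwise bound on the ball
  have hpt : ∀ y ∈ Metric.ball x d, v y ≤ A * v1 y + A * (A + 3) * l := by
    intro y hy
    have h1 : ∫⁻ y' in Metric.ball x d, v y ≤
        ∫⁻ y' in Metric.ball x d, A * (v1 y' + (v1 y + MF h x + v y')) := by
      refine setLIntegral_mono' measurableSet_ball fun y' hy' => (hv y hy y' hy').trans_eq ?_
      ring
    have h2 : ∫⁻ y' in Metric.ball x d, v y' ≤ ENNReal.ofReal (2 * (2 * d)) * l := by
      have hzb : z ∈ Metric.ball z (2 * d) := Metric.mem_ball_self (by linarith)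
      refine le_trans (lintegral_mono_set (Metric.ball_subset_ball' (by rw [hz]; linarith)))
        ((lintegral_ball_le_MF v hzb).trans (mul_le_mul_right hzO _))
    rw [lintegral_const_mul' _ _ (by simp), lintegral_add_left hv1m, lintegral_add_left measurable_const] at h1
    simp only [lintegral_const, Measure.restrict_apply MeasurableSet.univ, univ_inter, Real.volume_ball] at h1
    have h3 : ∫⁻ y' in Metric.ball x d, v1 y' ≤ A * ENNReal.ofReal d * l := by
      refine (setLIntegral_le_lintegral _ _).trans (hv1.trans (mul_le_mul_right hMl _))
    have e2 : ENNReal.ofReal (2 * d) = 2 * ENNReal.ofReal d := by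
      rw [ENNReal.ofReal_mul (by norm_num)]; simp
    have e4 : ENNReal.ofReal (2 * (2 * d)) = 4 * ENNReal.ofReal d := by
      rw [← mul_assoc, ENNReal.ofReal_mul (by norm_num)]; norm_num
    rw [e2] at h1
    rw [e4] at h2
    have h4 : v y * (2 * ENNReal.ofReal d) ≤ (A * v1 y + A * (A + 3) * l) * (2 * ENNReal.ofReal d) := by
      calc v y * (2 * ENNReal.ofReal d) ≤ A * (A * ENNReal.ofReal d * l +
            ((v1 y + l) * (2 * ENNReal.ofReal d) + 4 * ENNReal.ofReal d * l)) := by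
            refine h1.trans ?_
            gcongr
        _ ≤ A * (2 * (A * ENNReal.ofReal d * l) +
            ((v1 y + l) * (2 * ENNReal.ofReal d) + 4 * ENNReal.ofReal d * l)) := by
            have hh : A * ENNReal.ofReal d * l ≤ 2 * (A * ENNReal.ofReal d * l) := by
              rw [two_mul]; exact le_self_add
            exact mul_le_mul_right (add_le_add hh le_rfl) _
        _ = _ := by ring
    exact (ENNReal.mul_le_mul_iff_left (by simp [hd]) (ENNReal.mul_ne_top (by simp) ENNReal.ofReal_ne_top)).1 h4
  have hsub : {y | (8 + A * (A + 4)) * l < MF v y} ∩ Metric.closedBall x (d / 2) ⊆ {y | l < MF v1 y} := by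
    rintro y ⟨hy, hyx⟩
    obtain ⟨c, r, hr, hyc, hlt⟩ := lt_MF_iff.1 hy
    rw [lt_avg_iff hr] at hlt
    refine lt_MF_iff.2 ⟨c, r, hr, hyc, ?_⟩
    rw [lt_avg_iff hr]
    rw [Metric.mem_closedBall] at hyx
    rw [Metric.mem_ball] at hyc
    have hrd : r < d / 4 := by
      by_contra hcon
      push Not at hcon
      have hzb : z ∈ Metric.ball c (8 * r) := by
        rw [Metric.mem_ball]
        have t1 := dist_triangle z x c
        have t2 := dist_triangle x y c
        rw [dist_comm z x] at t1
        rw [dist_comm x y] at t2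
        linarith
      have h5 : ∫⁻ t in Metric.ball c r, v t ≤ ENNReal.ofReal (2 * (8 * r)) * l :=
        le_trans (lintegral_mono_set (Metric.ball_subset_ball (by linarith)))
          ((lintegral_ball_le_MF v hzb).trans (mul_le_mul_right hzO _))
      have h6 : ENNReal.ofReal (2 * (8 * r)) * l ≤ (8 + A * (A + 4)) * l * ENNReal.ofReal (2 * r) := by
        rw [show 2 * (8 * r) = 8 * (2 * r) by ring, ENNReal.ofReal_mul (by norm_num)]
        calc _ = 8 * l * ENNReal.ofReal (2 * r) := by norm_num; ring
          _ ≤ _ := by gcongr; exact le_self_add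
      exact absurd (hlt.trans_le (h5.trans h6)) (lt_irrefl _)
    have hIJ : Metric.ball c r ⊆ Metric.ball x d := by
      refine Metric.ball_subset_ball' ?_
      have t2 := dist_triangle c y x
      rw [dist_comm c y] at t2
      linarith
    have h7 : ∫⁻ t in Metric.ball c r, v t ≤ A * (∫⁻ t in Metric.ball c r, v1 t) +
        A * (A + 3) * l * ENNReal.ofReal (2 * r) := by
      calc ∫⁻ t in Metric.ball c r, v t ≤ ∫⁻ t in Metric.ball c r, (A * v1 t + A * (A + 3) * l) :=
            setLIntegral_mono' measurableSet_ball fun t ht => hpt t (hIJ ht)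
        _ = _ := by
            rw [lintegral_add_right _ measurable_const, lintegral_const_mul' _ _ (by simp)]
            simp [Real.volume_ball]
    by_contra hcon
    push Not at hcon
    have h8 : A * (∫⁻ t in Metric.ball c r, v1 t) + A * (A + 3) * l * ENNReal.ofReal (2 * r) ≤
        (8 + A * (A + 4)) * l * ENNReal.ofReal (2 * r) := by
      calc _ ≤ A * (l * ENNReal.ofReal (2 * r)) + A * (A + 3) * l * ENNReal.ofReal (2 * r) := by gcongr
        _ = (A * (A + 4)) * l * ENNReal.ofReal (2 * r) := by ring
        _ ≤ _ := by gcongr; exact le_add_self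
    exact absurd (hlt.trans_le (h7.trans h8)) (lt_irrefl _)
  refine (measure_mono hsub).trans ((MF_weak v1 hl hl').trans ((mul_le_mul_right hv1' _).trans_eq ?_))
  calc 4 / l * (A * ENNReal.ofReal d * (g * l)) = (4 / l * l) * (A * ENNReal.ofReal d * g) := by ring
    _ = _ := by rw [ENNReal.div_mul_cancel hl hl']; ring

lemma good_lambda_ineq {A : ℝ≥0} {v h : ℝ → ℝ≥0∞} (hH : GLHyp A v h) (hv : ∫⁻ t, v t ≠ ∞) {l : ℝ≥0∞} (hl : l ≠ 0)
    (hl' : l ≠ ∞) {g : ℝ≥0∞} (hg : g ≤ 1) :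
    volume {y | (8 + A * (A + 4)) * l < MF v y} ≤
      20 * A * g * volume {y | l < MF v y} + volume {y | g * l < MF h y} := by
  set O := {y | l < MF v y} with hO
  have hOfin : volume O ≠ ∞ := ne_top_of_le_ne_top
    (ENNReal.mul_ne_top (ENNReal.div_ne_top (by simp) hl) hv) (MF_weak v hl hl')
  have hOopen : IsOpen O := isOpen_MF v l
  have hOc : Oᶜ.Nonempty := by
    by_contra hcon
    rw [not_nonempty_iff_eq_empty, compl_empty_iff] at hcon
    rw [hcon] at hOfin
    simp at hOfin
  set E := {y | (8 + A * (A + 4)) * l < MF v y} ∩ {y | MF h y ≤ g * l} with hE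
  have hEO : E ⊆ O := by
    rintro y ⟨hy, -⟩
    have hy' : (8 + A * (A + 4)) * l < MF v y := hy
    change l < MF v y
    refine lt_of_le_of_lt ?_ hy'
    calc l = 1 * l := (one_mul l).symm
      _ ≤ _ := by
        gcongr
        exact le_trans (by norm_num) (le_self_add (a := (8 : ℝ≥0∞)))
  have hdpos : ∀ x ∈ E, 0 < Metric.infDist x Oᶜ := fun x hx =>
    (hOopen.isClosed_compl.notMem_iff_infDist_pos hOc).1 (by simpa using hEO hx)
  have hball : ∀ x, Metric.ball x (Metric.infDist x Oᶜ) ⊆ O := fun x => by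
    have := Metric.disjoint_ball_infDist (x := x) (s := Oᶜ)
    exact disjoint_compl_right_iff_subset.1 this
  have hR : ∀ x ∈ E, Metric.infDist x Oᶜ / 10 ≤ (volume O).toReal := by
    intro x hx
    have h1 := measure_mono (μ := volume) (hball x)
    rw [Real.volume_ball, ENNReal.ofReal_le_iff_le_toReal hOfin] at h1
    linarith [hdpos x hx]
  obtain ⟨u, huE, hdisj, hcov⟩ := Vitali.exists_disjoint_subfamily_covering_enlargement_closedBall E
    (fun x => x) (fun x => Metric.infDist x Oᶜ / 10) _ hR 5 (by norm_num)
  have hucount : u.Countable := by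
    refine hdisj.countable_of_nonempty_interior (fun a ha => ?_)
    refine ⟨a, ?_⟩
    exact Metric.ball_subset_interior_closedBall (Metric.mem_ball_self (by linarith [hdpos a (huE ha)]))
  have hsub : E ⊆ ⋃ x ∈ u, (E ∩ Metric.closedBall x (Metric.infDist x Oᶜ / 2)) := by
    intro x hx
    obtain ⟨b, hb, hbs⟩ := hcov x hx
    refine mem_biUnion hb ⟨hx, ?_⟩
    have := hbs (Metric.mem_closedBall_self (by linarith [hdpos x hx]))
    rwa [show 5 * (Metric.infDist b Oᶜ / 10) = Metric.infDist b Oᶜ / 2 by ring] at this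
  have hEvol : volume E ≤ 20 * A * g * volume O := by
    calc volume E ≤ volume (⋃ x ∈ u, (E ∩ Metric.closedBall x (Metric.infDist x Oᶜ / 2))) := measure_mono hsub
      _ ≤ ∑' x : u, volume (E ∩ Metric.closedBall x.1 (Metric.infDist x.1 Oᶜ / 2)) := measure_biUnion_le _ hucount _
      _ ≤ ∑' x : u, 20 * A * g * volume (Metric.closedBall x.1 (Metric.infDist x.1 Oᶜ / 10)) := by
          refine ENNReal.tsum_le_tsum fun x => ?_
          have hxE := huE x.2
          obtain ⟨z, hzO, hz⟩ := hOopen.isClosed_compl.exists_infDist_eq_dist hOc x.1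
          refine (measure_mono (inter_subset_inter_left _ inter_subset_left)).trans
            ((good_lambda_local hH hl hl' hg x.1 _ z (hdpos _ hxE) hz.symm (by simpa [hO] using hzO) hxE.2).trans_eq ?_)
          rw [Real.volume_closedBall, show Metric.infDist x.1 Oᶜ = 5 * (2 * (Metric.infDist x.1 Oᶜ / 10)) by ring,
            ENNReal.ofReal_mul (by norm_num)]
          rw [show 5 * (2 * (Metric.infDist x.1 Oᶜ / 10)) / 10 = Metric.infDist x.1 Oᶜ / 10 by ring]
          norm_num
          ring
      _ = 20 * A * g * volume (⋃ x ∈ u, Metric.closedBall x (Metric.infDist x Oᶜ / 10)) := by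
          rw [ENNReal.tsum_mul_left, measure_biUnion hucount hdisj (fun x _ => measurableSet_closedBall)]
      _ ≤ _ := by
          refine mul_le_mul_right (measure_mono (iUnion₂_subset fun x hx => ?_)) _
          exact (Metric.closedBall_subset_ball (by linarith [hdpos x (huE hx)])).trans (hball x)
  calc _ ≤ volume (E ∪ {y | g * l < MF h y}) := by
        refine measure_mono fun y hy => ?_
        by_cases h1 : g * l < MF h y
        · exact Or.inr h1
        · exact Or.inl ⟨hy, not_lt.1 h1⟩
    _ ≤ _ := (measure_union_le _ _).trans (by gcongr)

theorem good_lambda (A : ℝ≥0) {r : ℝ} (hr : 1 < r) : ∃ C : ℝ≥0∞, C ≠ ∞ ∧ ∀ v h : ℝ → ℝ≥0∞, Continuous v →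
    Measurable h → (∃ B : ℝ≥0∞, B ≠ ∞ ∧ ∀ x, v x ≤ B) → (∃ B : ℝ≥0∞, B ≠ ∞ ∧ ∀ x, h x ≤ B) →
    ∫⁻ t, v t ≠ ∞ → GLHyp A v h → ∫⁻ x, v x ^ r ≤ C * ∫⁻ x, h x ^ r := by
  have hr0 : 0 < r := by linarith
  obtain ⟨C0, hC0, hstrong⟩ := MF_strong hr
  set K : ℝ≥0 := 8 + A * (A + 4) with hK
  have hKcast : (8 + A * (A + 4) : ℝ≥0∞) = (K : ℝ≥0∞) := by rw [hK]; push_cast; rfl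
  have hKpos : 0 < K := by rw [hK]; positivity
  set g : ℝ≥0 := min 1 (K ^ (-r) / (40 * A + 1)) with hg
  have hg1 : g ≤ 1 := min_le_left _ _
  have hgpos : 0 < g := lt_min one_pos (div_pos (NNReal.rpow_pos hKpos) (by positivity))
  have hgK : 2 * (20 * A * g) ≤ K ^ (-r) := by
    have h1 : g ≤ K ^ (-r) / (40 * A + 1) := min_le_right _ _
    rw [le_div_iff₀ (by positivity)] at h1
    refine le_trans ?_ h1
    calc 2 * (20 * A * g) = g * (40 * A) := by ring
      _ ≤ _ := by gcongr; exact le_self_add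
  refine ⟨2 * (K : ℝ≥0∞) ^ r * ((g : ℝ≥0∞)⁻¹ ^ r * C0), ?_, ?_⟩
  · refine ENNReal.mul_ne_top (ENNReal.mul_ne_top (by simp) (ENNReal.rpow_ne_top_of_nonneg hr0.le (by simp)))
      (ENNReal.mul_ne_top (ENNReal.rpow_ne_top_of_nonneg hr0.le ?_) hC0)
    simp [hgpos.ne']
  rintro v h hvc hhm ⟨B, hB, hvB⟩ ⟨B', hB', hhB⟩ hvint hH
  set X := ∫⁻ x, MF v x ^ r with hX
  set Y := ∫⁻ x, MF h x ^ r with hY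
  have hXfin : X ≠ ∞ := by
    refine ne_top_of_le_ne_top (ENNReal.mul_ne_top hC0 ?_) (hstrong v hvc.measurable ⟨B, hB, hvB⟩)
    refine ne_top_of_le_ne_top (ENNReal.mul_ne_top
      (ENNReal.rpow_ne_top_of_nonneg (by linarith : (0:ℝ) ≤ r - 1) hB) hvint) ?_
    rw [← lintegral_const_mul _ hvc.measurable]
    refine lintegral_mono fun x => ?_
    by_cases h0 : v x = 0
    · simp [h0, ENNReal.zero_rpow_of_pos hr0]
    · calc v x ^ r = v x ^ (r - 1) * v x := by
            conv_lhs => rw [show r = (r - 1) + 1 by ring,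
              ENNReal.rpow_add _ _ h0 (ne_top_of_le_ne_top hB (hvB x)), ENNReal.rpow_one]
        _ ≤ _ := by gcongr; exact hvB x
  have hvfin : ∀ x, MF v x ≠ ∞ := fun x => ne_top_of_le_ne_top hB (MF_le_of_le hvB x)
  have hhfin : ∀ x, MF h x ≠ ∞ := fun x => ne_top_of_le_ne_top hB' (MF_le_of_le hhB x)
  have hKi : (K : ℝ≥0∞)⁻¹ ≠ ∞ := by simp [hKpos.ne']
  have hgi : (g : ℝ≥0∞)⁻¹ ≠ ∞ := by simp [hgpos.ne']
  have l1 := layercake_enn volume (f := fun x => (K : ℝ≥0∞)⁻¹ * MF v x) ((measurable_MF v).const_mul _)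
    (fun x => ENNReal.mul_ne_top hKi (hvfin x)) hr0
  have l2 := layercake_enn volume (measurable_MF v) hvfin hr0
  have l3 := layercake_enn volume (f := fun x => (g : ℝ≥0∞)⁻¹ * MF h x) ((measurable_MF h).const_mul _)
    (fun x => ENNReal.mul_ne_top hgi (hhfin x)) hr0
  have e1 : ∫⁻ x, ((K : ℝ≥0∞)⁻¹ * MF v x) ^ r = ((K : ℝ≥0∞)⁻¹) ^ r * X := by
    rw [hX, ← lintegral_const_mul _ ((measurable_MF v).pow_const r)]
    exact lintegral_congr fun x => ENNReal.mul_rpow_of_nonneg _ _ hr0.le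
  have e3 : ∫⁻ x, ((g : ℝ≥0∞)⁻¹ * MF h x) ^ r = ((g : ℝ≥0∞)⁻¹) ^ r * Y := by
    rw [hY, ← lintegral_const_mul _ ((measurable_MF h).pow_const r)]
    exact lintegral_congr fun x => ENNReal.mul_rpow_of_nonneg _ _ hr0.le
  have main : ((K : ℝ≥0∞)⁻¹) ^ r * X ≤ (20 * A * g : ℝ≥0) * X + ((g : ℝ≥0∞)⁻¹) ^ r * Y := by
    rw [← e1, ← e3, l1, l3, hX, l2, mul_left_comm, ← mul_add]
    refine mul_le_mul_right ?_ _
    have hanti : ∀ f : ℝ → ℝ≥0∞, Measurable fun t : ℝ => volume {x | ENNReal.ofReal t < f x} := fun f =>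
      Antitone.measurable fun s t hst => measure_mono fun x (hx : _ < _) => lt_of_le_of_lt (ENNReal.ofReal_le_ofReal hst) hx
    have hpm : Measurable fun t : ℝ => ENNReal.ofReal (t ^ (r - 1)) :=
      (measurable_id.pow_const _).ennreal_ofReal
    have hmeas : Measurable fun t : ℝ => ((20 * A * g : ℝ≥0) : ℝ≥0∞) *
        (volume {x | ENNReal.ofReal t < MF v x} * ENNReal.ofReal (t ^ (r - 1))) :=
      ((hanti _).mul hpm).const_mul _
    rw [← lintegral_const_mul' _ _ ENNReal.coe_ne_top, ← lintegral_add_left hmeas]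
    refine setLIntegral_mono' measurableSet_Ioi fun t ht => ?_
    have ht0 : (0:ℝ) < t := ht
    rw [← mul_assoc, ← add_mul]
    refine mul_le_mul_left ?_ _
    have := good_lambda_ineq hH hvint (l := ENNReal.ofReal t) (by simp [ht0]) ENNReal.ofReal_ne_top
      (g := g) (by exact_mod_cast hg1)
    rw [hKcast] at this
    have s1 : {x | ENNReal.ofReal t < (K : ℝ≥0∞)⁻¹ * MF v x} = {y | (K : ℝ≥0∞) * ENNReal.ofReal t < MF v y} := by
      ext x
      simp only [mem_ofPred_eq]
      rw [mul_comm (K : ℝ≥0∞)⁻¹, ← div_eq_mul_inv,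
        ENNReal.lt_div_iff_mul_lt (Or.inl (by simp [hKpos.ne'])) (Or.inl (by simp)), mul_comm]
    have s2 : {x | ENNReal.ofReal t < (g : ℝ≥0∞)⁻¹ * MF h x} = {y | (g : ℝ≥0∞) * ENNReal.ofReal t < MF h y} := by
      ext x
      simp only [mem_ofPred_eq]
      rw [mul_comm (g : ℝ≥0∞)⁻¹, ← div_eq_mul_inv,
        ENNReal.lt_div_iff_mul_lt (Or.inl (by simp [hgpos.ne'])) (Or.inl (by simp)), mul_comm]
    rw [s1, s2]
    refine this.trans_eq ?_
    push_cast
    rfl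
  have hKr : ((K : ℝ≥0∞)⁻¹) ^ r = (K ^ (-r) : ℝ≥0) := by
    rw [← ENNReal.coe_inv hKpos.ne', ← ENNReal.coe_rpow_of_nonneg _ hr0.le, NNReal.inv_rpow, ← NNReal.rpow_neg]
  have hfin2 : ((20 * A * g : ℝ≥0) : ℝ≥0∞) * X ≠ ∞ := ENNReal.mul_ne_top ENNReal.coe_ne_top hXfin
  have h2 : ((20 * A * g : ℝ≥0) : ℝ≥0∞) * X + ((20 * A * g : ℝ≥0) : ℝ≥0∞) * X ≤ ((K : ℝ≥0∞)⁻¹) ^ r * X := by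
    rw [hKr, ← add_mul]
    gcongr
    rw [← two_mul]
    exact_mod_cast hgK
  have h3 : ((20 * A * g : ℝ≥0) : ℝ≥0∞) * X ≤ ((g : ℝ≥0∞)⁻¹) ^ r * Y :=
    (ENNReal.add_le_add_iff_left hfin2).1 (h2.trans main)
  have h4 : ((K : ℝ≥0∞)⁻¹) ^ r * X ≤ 2 * (((g : ℝ≥0∞)⁻¹) ^ r * Y) := by
    rw [two_mul]; exact main.trans (add_le_add_left h3 _)
  have h5 : X ≤ (K : ℝ≥0∞) ^ r * (2 * (((g : ℝ≥0∞)⁻¹) ^ r * Y)) := by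
    calc X = ((K : ℝ≥0∞) ^ r * ((K : ℝ≥0∞)⁻¹) ^ r) * X := by
          rw [← ENNReal.mul_rpow_of_nonneg _ _ hr0.le, ENNReal.mul_inv_cancel (by simp [hKpos.ne']) (by simp)]
          simp
      _ ≤ _ := by rw [mul_assoc]; gcongr
  calc ∫⁻ x, v x ^ r ≤ X := lintegral_mono fun x => ENNReal.rpow_le_rpow (le_MF hvc x) hr0.le
    _ ≤ _ := h5
    _ ≤ (K : ℝ≥0∞) ^ r * (2 * (((g : ℝ≥0∞)⁻¹) ^ r * (C0 * ∫⁻ x, h x ^ r))) := by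
        gcongr
        exact hstrong h hhm ⟨B', hB', hhB⟩
    _ = _ := by ring

lemma cs_lintegral {α : Type*} [MeasurableSpace α] (μ : Measure α) {f g : α → ℝ≥0∞}
    (hf : AEMeasurable f μ) (hg : AEMeasurable g μ) :
    (∫⁻ a, f a * g a ∂μ) ^ 2 ≤ (∫⁻ a, f a ^ 2 ∂μ) * ∫⁻ a, g a ^ 2 ∂μ := by
  have h := ENNReal.lintegral_mul_le_Lp_mul_Lq μ Real.HolderConjugate.two_two hf hg
  simp only [Pi.mul_apply, ENNReal.rpow_two] at h
  refine (pow_le_pow_left₀ zero_le h 2).trans_eq ?_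
  rw [mul_pow, ← ENNReal.rpow_two, ← ENNReal.rpow_two, ← ENNReal.rpow_mul, ← ENNReal.rpow_mul]
  norm_num

lemma cs_tsum {α : Type*} [Countable α] (f g : α → ℝ≥0∞) :
    (∑' a, f a * g a) ^ 2 ≤ (∑' a, f a ^ 2) * ∑' a, g a ^ 2 := by
  let _ : MeasurableSpace α := ⊤
  have := cs_lintegral (Measure.count (α := α)) (f := f) (g := g)
    (measurable_of_countable _).aemeasurable (measurable_of_countable _).aemeasurable
  simpa [lintegral_count] using this

lemma enorm_e2pi (t : ℝ) : ‖e2pi t‖ₑ = 1 := by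
  have : ‖e2pi t‖ = 1 := by
    rw [e2pi, show 2 * (Real.pi : ℂ) * Complex.I * (t : ℂ) = ((2 * π * t : ℝ) : ℂ) * Complex.I by push_cast; ring]
    exact Complex.norm_exp_ofReal_mul_I _
  rw [← ofReal_norm, this]; simp

lemma norm_e2pi (t : ℝ) : ‖e2pi t‖ = 1 := by
  rw [e2pi, show 2 * (Real.pi : ℂ) * Complex.I * (t : ℂ) = ((2 * π * t : ℝ) : ℂ) * Complex.I by push_cast; ring]
  exact Complex.norm_exp_ofReal_mul_I _

lemma e2pi_add (s t : ℝ) : e2pi (s + t) = e2pi s * e2pi t := by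
  rw [e2pi, e2pi, e2pi, ← Complex.exp_add]; congr 1; push_cast; ring

lemma continuous_e2pi : Continuous e2pi := by unfold e2pi; fun_prop

lemma hasDerivAt_e2pi (c t : ℝ) :
    HasDerivAt (fun t => e2pi (c * t)) (2 * π * Complex.I * c * e2pi (c * t)) t := by
  unfold e2pi
  have h : HasDerivAt (fun t : ℝ => 2 * (π : ℂ) * Complex.I * ((c * t : ℝ) : ℂ)) (2 * π * Complex.I * c) t := by
    have := ((hasDerivAt_id t).const_mul c).ofReal_comp.const_mul (2 * (π : ℂ) * Complex.I)
    simpa using this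
  convert h.cexp using 1
  ring

lemma bessel {ι : Type*} {lam : ℝ} (hlam : 0 < lam) (l : ℝ) {u : ℝ → ℂ} (hum : Measurable u) {B : ℝ}
    (hub : ∀ t, ‖u t‖ ≤ B) (M : Finset ι) (n : ι → ℤ) (hn : Set.InjOn n M) :
    ∑ m ∈ M, ‖∫ t in Ioc l (l + lam⁻¹), e2pi (-(n m * lam * t)) * u t‖ₑ ^ 2 ≤
      ENNReal.ofReal lam⁻¹ * ∫⁻ t in Ioc l (l + lam⁻¹), ‖u t‖ₑ ^ 2 := by
  have hli : 0 < lam⁻¹ := inv_pos.2 hlam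
  have hab : l < l + lam⁻¹ := by linarith
  have hmem : MemLp u 2 (volume.restrict (Ioc l (l + lam⁻¹))) :=
    MemLp.of_bound hum.aestronglyMeasurable B (Filter.Eventually.of_forall hub)
  have hs := hasSum_sq_fourierCoeffOn hab hmem
  have h1 : ∑ m ∈ M, ‖fourierCoeffOn hab u (n m)‖ ^ 2 ≤ (l + lam⁻¹ - l)⁻¹ • ∫ x in l..(l + lam⁻¹), ‖u x‖ ^ 2 := by
    classical
    rw [← Finset.sum_image (f := fun k => ‖fourierCoeffOn hab u k‖ ^ 2) hn]
    exact sum_le_hasSum _ (fun _ _ => by positivity) hs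
  have h2 : ∀ m, ‖∫ t in Ioc l (l + lam⁻¹), e2pi (-(n m * lam * t)) * u t‖ ^ 2 =
      lam⁻¹ ^ 2 * ‖fourierCoeffOn hab u (n m)‖ ^ 2 := by
    intro m
    rw [fourierCoeffOn_eq_integral, intervalIntegral.integral_of_le hab.le, norm_smul, mul_pow, ← mul_assoc]
    have : ‖1 / (l + lam⁻¹ - l)‖ = lam := by
      rw [add_sub_cancel_left, one_div, inv_inv, Real.norm_of_nonneg hlam.le]
    rw [this, ← mul_pow, inv_mul_cancel₀ hlam.ne', one_pow, one_mul]
    congr 3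
    ext t
    rw [smul_eq_mul, fourier_coe_apply, e2pi]
    congr 2
    rw [add_sub_cancel_left]
    push_cast
    field_simp
  have h3 : ∑ m ∈ M, ‖∫ t in Ioc l (l + lam⁻¹), e2pi (-(n m * lam * t)) * u t‖ ^ 2 ≤
      lam⁻¹ * ∫ t in Ioc l (l + lam⁻¹), ‖u t‖ ^ 2 := by
    simp_rw [h2]
    rw [← Finset.mul_sum]
    refine (mul_le_mul_of_nonneg_left h1 (by positivity)).trans_eq ?_
    rw [intervalIntegral.integral_of_le hab.le, add_sub_cancel_left, smul_eq_mul]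
    field_simp
  have h4 := ENNReal.ofReal_le_ofReal h3
  rw [ENNReal.ofReal_sum_of_nonneg (fun _ _ => by positivity), ENNReal.ofReal_mul hli.le,
    ofReal_integral_eq_lintegral_ofReal] at h4
  · simp_rw [ENNReal.ofReal_pow (norm_nonneg _), ofReal_norm] at h4
    exact h4
  · simpa using hmem.integrable_norm_pow (by norm_num)
  · exact Filter.Eventually.of_forall fun _ => by positivity

lemma sq_add_le_enn (a b : ℝ≥0∞) : (a + b) ^ 2 ≤ 2 * a ^ 2 + 2 * b ^ 2 := by
  have := ENNReal.rpow_add_le_mul_rpow_add_rpow a b (p := 2) (by norm_num)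
  norm_num at this
  rwa [mul_add] at this

/-- Bessel inequality with smooth amplitudes. -/
lemma bessel_amp {ι : Type*} {lam : ℝ} (hlam : 0 < lam) (l : ℝ) {u : ℝ → ℂ} (hum : Measurable u) {B : ℝ}
    (hub : ∀ t, ‖u t‖ ≤ B) (M : Finset ι) (n : ι → ℤ) (hn : Set.InjOn n M) (A A' : ι → ℝ → ℂ)
    (hA : ∀ m t, HasDerivAt (A m) (A' m t) t) (hA'c : ∀ m, Continuous (A' m)) {κ : ℝ} (hκ : 0 ≤ κ)
    (hAκ : ∀ m ∈ M, ‖A m l‖ ≤ κ)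
    (hA'κ : ∀ m ∈ M, ∀ t ∈ Ioc l (l + lam⁻¹), ‖A' m t‖ ≤ κ * lam) :
    ∑ m ∈ M, ‖∫ t in Ioc l (l + lam⁻¹), A m t * (e2pi (-(n m * lam * t)) * u t)‖ₑ ^ 2 ≤
      4 * ENNReal.ofReal (κ ^ 2 * lam⁻¹) * ∫⁻ t in Ioc l (l + lam⁻¹), ‖u t‖ₑ ^ 2 := by
  have hli : 0 < lam⁻¹ := inv_pos.2 hlam
  set L := Ioc l (l + lam⁻¹) with hL
  set μ := volume.restrict L with hμ
  have : IsFiniteMeasure μ := by rw [hμ, hL]; infer_instance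
  let w : ι → ℝ → ℂ := fun m t => e2pi (-(n m * lam * t)) * u t
  have hwm : ∀ m, Measurable (w m) := fun m =>
    (continuous_e2pi.comp (by fun_prop)).measurable.mul hum
  have hwb : ∀ m t, ‖w m t‖ ≤ B := fun m t => by
    simp only [w]; rw [norm_mul, norm_e2pi, one_mul]; exact hub t
  have hwi : ∀ m, Integrable (w m) μ := fun m =>
    Integrable.of_bound (hwm m).aestronglyMeasurable B (Filter.Eventually.of_forall (hwb m))
  have hA'i : ∀ m, Integrable (A' m) μ := fun m => by
    have : IntegrableOn (A' m) (Icc l (l + lam⁻¹)) := (hA'c m).continuousOn.integrableOn_compact isCompact_Icc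
    exact this.mono_set Ioc_subset_Icc_self
  let U : ι → ℝ → ℂ := fun m s => ∫ t, w m t * (Ioi s).indicator 1 t ∂μ
  -- representation
  have hrep : ∀ m, ∫ t, A m t * w m t ∂μ = A m l * (∫ t, w m t ∂μ) + ∫ s, A' m s * U m s ∂μ := by
    intro m
    have hF : Integrable (fun z : ℝ × ℝ => {z : ℝ × ℝ | z.1 < z.2}.indicator (fun z => A' m z.1 * w m z.2) z) (μ.prod μ) :=
      ((hA'i m).mul_prod (hwi m)).indicator (measurableSet_lt measurable_fst measurable_snd)
    have hsw := integral_integral_swap (f := fun s t => {z : ℝ × ℝ | z.1 < z.2}.indicator (fun z => A' m z.1 * w m z.2) (s, t)) hF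
    have e1 : ∀ s, ∫ t, {z : ℝ × ℝ | z.1 < z.2}.indicator (fun z => A' m z.1 * w m z.2) (s, t) ∂μ = A' m s * U m s := by
      intro s
      simp only [U]
      rw [← integral_const_mul]
      congr 1; ext t
      by_cases h : s < t <;> simp [indicator, h]
    have e2 : ∀ t ∈ L, ∫ s, {z : ℝ × ℝ | z.1 < z.2}.indicator (fun z => A' m z.1 * w m z.2) (s, t) ∂μ =
        (A m t - A m l) * w m t := by
      intro t ht
      have : ∀ s, {z : ℝ × ℝ | z.1 < z.2}.indicator (fun z => A' m z.1 * w m z.2) (s, t) =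
          (Iio t).indicator (A' m) s * w m t := by
        intro s
        by_cases h : s < t <;> simp [indicator, h]
      simp_rw [this]
      rw [integral_mul_const]
      congr 1
      rw [integral_indicator measurableSet_Iio, hμ, Measure.restrict_restrict measurableSet_Iio,
        ← intervalIntegral.integral_eq_sub_of_hasDerivAt (fun x _ => hA m x) ((hA'c m).intervalIntegrable _ _),
        intervalIntegral.integral_of_le ht.1.le, integral_Ioc_eq_integral_Ioo]
      congr 2
      ext s
      simp only [hL, mem_inter_iff, mem_Iio, mem_Ioc, mem_Ioo]
      constructor
      · rintro ⟨h1, h2, h3⟩; exact ⟨h2, h1⟩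
      · rintro ⟨h1, h2⟩; exact ⟨h2, h1, (h2.le.trans ht.2)⟩
    simp_rw [e1] at hsw
    rw [hsw, hμ, setIntegral_congr_fun measurableSet_Ioc e2, ← integral_const_mul]
    have hAc : Continuous (A m) := continuous_iff_continuousAt.2 fun t => (hA m t).continuousAt
    have hAw : Integrable (fun t => A m t * w m t) μ := by
      obtain ⟨D, hD⟩ := (isCompact_Icc (a := l) (b := l + lam⁻¹)).exists_bound_of_continuousOn hAc.continuousOn
      refine Integrable.of_bound (C := D * B) (hAc.measurable.mul (hwm m)).aestronglyMeasurable ?_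
      filter_upwards [ae_restrict_mem measurableSet_Ioc] with t ht
      rw [norm_mul]
      have := hD t (Ioc_subset_Icc_self ht)
      exact mul_le_mul this (hwb m t) (norm_nonneg _) ((norm_nonneg _).trans this)
    rw [← integral_add ((hwi m).const_mul _)]
    · congr 1; ext t; ring
    · simp_rw [sub_mul]
      exact hAw.sub ((hwi m).const_mul _)
  have hUm : ∀ m, AEMeasurable (fun s => ‖U m s‖ₑ) μ := by
    intro m
    have : StronglyMeasurable (U m) := by
      refine StronglyMeasurable.integral_prod_right (f := fun s t => w m t * (Ioi s).indicator 1 t) ?_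
      refine Measurable.stronglyMeasurable ?_
      have e : (uncurry fun s t => w m t * (Ioi s).indicator 1 t) =
          {z : ℝ × ℝ | z.1 < z.2}.indicator (fun z => w m z.2) := by
        ext ⟨s, t⟩
        by_cases h : s < t <;> simp [indicator, h]
      rw [e]
      exact ((hwm m).comp measurable_snd).indicator (measurableSet_lt measurable_fst measurable_snd)
    exact this.enorm.aemeasurable
  have hB1 := bessel hlam l hum hub M n hn
  have hB2 : ∀ s, ∑ m ∈ M, ‖U m s‖ₑ ^ 2 ≤ ENNReal.ofReal lam⁻¹ * ∫⁻ t in L, ‖u t‖ₑ ^ 2 := by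
    intro s
    have hle : ∀ t, ‖(Ioi s).indicator u t‖ ≤ ‖u t‖ := fun t => norm_indicator_le_norm_self _ _
    have := bessel hlam l (hum.indicator (measurableSet_Ioi (a := s))) (fun t => (hle t).trans (hub t)) M n hn
    refine le_trans (le_of_eq ?_) (this.trans ?_)
    · refine Finset.sum_congr rfl fun m _ => ?_
      congr 2
      refine integral_congr_ae (Filter.Eventually.of_forall fun t => ?_)
      by_cases h : s < t <;> simp [w, indicator, h]
    · gcongr with t
      exact enorm_indicator_le_enorm_self _ _
  have hpt : ∀ m ∈ M, ‖∫ t in L, A m t * (e2pi (-(n m * lam * t)) * u t)‖ₑ ^ 2 ≤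
      2 * ENNReal.ofReal κ ^ 2 * ‖∫ t in L, e2pi (-(n m * lam * t)) * u t‖ₑ ^ 2 +
      2 * (ENNReal.ofReal κ ^ 2 * ENNReal.ofReal lam) * ∫⁻ s, ‖U m s‖ₑ ^ 2 ∂μ := by
    intro m hm
    have e := hrep m
    simp only [w] at e
    rw [e]
    have h1 : ‖A m l‖ₑ ≤ ENNReal.ofReal κ := by
      rw [← ofReal_norm]; exact ENNReal.ofReal_le_ofReal (hAκ m hm)
    have h2 : ‖∫ s, A' m s * U m s ∂μ‖ₑ ≤ ENNReal.ofReal (κ * lam) * ∫⁻ s, 1 * ‖U m s‖ₑ ∂μ := by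
      refine (enorm_integral_le_lintegral_enorm _).trans ?_
      rw [← lintegral_const_mul' _ _ ENNReal.ofReal_ne_top]
      refine setLIntegral_mono' measurableSet_Ioc fun t ht => ?_
      rw [enorm_mul, one_mul]
      gcongr
      rw [← ofReal_norm]; exact ENNReal.ofReal_le_ofReal (hA'κ m hm t ht)
    have h3 := cs_lintegral μ (f := fun _ => 1) (g := fun s => ‖U m s‖ₑ) aemeasurable_const (hUm m)
    have h4 : ∫⁻ _, (1:ℝ≥0∞) ^ 2 ∂μ = ENNReal.ofReal lam⁻¹ := by
      simp [hμ, hL]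
    rw [h4] at h3
    refine (pow_le_pow_left₀ zero_le (enorm_add_le _ _) 2).trans ((sq_add_le_enn _ _).trans ?_)
    refine add_le_add ?_ ?_
    · rw [enorm_mul, mul_pow, mul_assoc]; gcongr
    · rw [mul_assoc]
      refine mul_le_mul_right ?_ _
      refine (pow_le_pow_left₀ zero_le h2 2).trans ?_
      rw [mul_pow, ENNReal.ofReal_mul hκ, mul_pow, mul_assoc, mul_assoc]
      refine mul_le_mul_right ?_ _
      refine (mul_le_mul_right h3 _).trans_eq ?_
      rw [← mul_assoc, pow_two, mul_assoc (ENNReal.ofReal lam), ← ENNReal.ofReal_mul hlam.le, mul_inv_cancel₀ hlam.ne']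
      simp
  refine (Finset.sum_le_sum hpt).trans ?_
  rw [Finset.sum_add_distrib, ← Finset.mul_sum, ← Finset.mul_sum,
    ← lintegral_finsetSum' _ (fun m _ => (hUm m).pow_const 2)]
  have h5 : ∫⁻ s, ∑ m ∈ M, ‖U m s‖ₑ ^ 2 ∂μ ≤ ENNReal.ofReal lam⁻¹ * (ENNReal.ofReal lam⁻¹ * ∫⁻ t in L, ‖u t‖ₑ ^ 2) := by
    refine (lintegral_mono hB2).trans_eq ?_
    simp only [lintegral_const, hμ, hL, Measure.restrict_apply MeasurableSet.univ, univ_inter, Real.volume_Ioc]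
    rw [add_sub_cancel_left, mul_comm]
  refine (add_le_add (mul_le_mul_right hB1 _) (mul_le_mul_right h5 _)).trans_eq ?_
  have hc : ENNReal.ofReal lam * ENNReal.ofReal lam⁻¹ = 1 := by
    rw [← ENNReal.ofReal_mul hlam.le, mul_inv_cancel₀ hlam.ne']; simp
  rw [ENNReal.ofReal_mul (by positivity), ENNReal.ofReal_pow hκ]
  set X := ∫⁻ t in L, ‖u t‖ₑ ^ 2
  calc _ = 2 * ENNReal.ofReal κ ^ 2 * (ENNReal.ofReal lam⁻¹ * X) +
    2 * ENNReal.ofReal κ ^ 2 * (ENNReal.ofReal lam * ENNReal.ofReal lam⁻¹) * (ENNReal.ofReal lam⁻¹ * X) := by ring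
    _ = _ := by rw [hc]; ring

/-- Measurable, integrable, bounded functions. -/
structure Cls (f : ℝ → ℂ) : Prop where
  meas : Measurable f
  int : Integrable f
  bdd : ∃ B, ∀ t, ‖f t‖ ≤ B

lemma schwartz_decay (G : SchwartzMap ℝ ℂ) (n : ℕ) : ∃ D : ℝ, 0 < D ∧ ∀ x, ‖G x‖ * (1 + |x|) ^ n ≤ D := by
  refine ⟨2 ^ n * (Finset.Iic ((n, 0) : ℕ × ℕ)).sup (fun m => SchwartzMap.seminorm ℝ m.1 m.2) G + 1, ?_, fun x => ?_⟩
  · have : 0 ≤ (Finset.Iic ((n, 0) : ℕ × ℕ)).sup (fun m => SchwartzMap.seminorm ℝ m.1 m.2) G := apply_nonneg _ _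
    positivity
  · have := SchwartzMap.one_add_le_sup_seminorm_apply (𝕜 := ℝ) (m := (n, 0)) (k := n) (n := 0) le_rfl le_rfl G x
    simp only [norm_iteratedFDeriv_zero, Real.norm_eq_abs] at this
    linarith

lemma schwartz_mv (G : SchwartzMap ℝ ℂ) {D : ℝ} (hD0 : 0 < D) (hD : ∀ x, ‖deriv G x‖ * (1 + |x|) ^ 3 ≤ D)
    {lam el x0 d t rho y y' : ℝ} (hlam : 0 < lam) (h1 : lam ≤ el) (h2 : el ≤ 2 * lam) (hrho : 0 < rho)
    (hR : ∀ ξ ∈ Metric.ball x0 d, rho ≤ 1 + lam * |ξ - t|)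
    (hy : y ∈ Metric.ball x0 d) (hy' : y' ∈ Metric.ball x0 d) :
    ‖G (el * (y - t)) - G (el * (y' - t))‖ ≤ 4 * lam * d * D / rho ^ 3 := by
  have hel : 0 < el := hlam.trans_le h1
  have key := Convex.norm_image_sub_le_of_norm_hasDerivWithin_le (f := fun ξ : ℝ => G (el * (ξ - t)))
    (f' := fun ξ => el • deriv G (el * (ξ - t))) (C := 2 * lam * (D / rho ^ 3)) (s := Metric.ball x0 d) ?_ ?_
    (convex_ball _ _) hy' hy
  · refine key.trans ?_
    have : ‖y - y'‖ ≤ 2 * d := by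
      rw [← dist_eq_norm]
      have := dist_triangle_right y y' x0
      rw [Metric.mem_ball] at hy hy'
      linarith
    calc _ ≤ 2 * lam * (D / rho ^ 3) * (2 * d) := by gcongr
      _ = _ := by ring
  · intro ξ _
    have h := (G.hasDerivAt (el * (ξ - t))).scomp ξ (((hasDerivAt_id ξ).sub_const t).const_mul el)
    simpa [Function.comp_def] using h.hasDerivWithinAt (s := Metric.ball x0 d)
  · intro ξ hξ
    rw [norm_smul, Real.norm_of_nonneg hel.le]
    refine mul_le_mul h2 ?_ (norm_nonneg _) (by positivity)
    rw [le_div_iff₀ (by positivity)]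
    refine le_trans ?_ (hD (el * (ξ - t)))
    gcongr
    refine (hR ξ hξ).trans ?_
    rw [abs_mul, abs_of_pos hel]
    gcongr

lemma geom {lam x0 d t t' ξ : ℝ} {i : ℤ} (hlam : 0 < lam)
    (ht : t ∈ Icc (x0 + i * lam⁻¹) (x0 + i * lam⁻¹ + lam⁻¹))
    (ht' : t' ∈ Icc (x0 + i * lam⁻¹) (x0 + i * lam⁻¹ + lam⁻¹))
    (h4 : 4 * d ≤ |t' - x0|) (hξ : ξ ∈ Metric.ball x0 d) :
    (1 + |(i : ℝ)|) / 4 ≤ 1 + lam * |ξ - t| := by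
  rw [Metric.mem_ball, Real.dist_eq] at hξ
  have hc : lam * lam⁻¹ = 1 := mul_inv_cancel₀ hlam.ne'
  have a1 : (i : ℝ) ≤ lam * (t - x0) ∧ lam * (t - x0) ≤ i + 1 := by
    constructor
    · have := mul_le_mul_of_nonneg_left ht.1 hlam.le
      rw [mul_add, mul_left_comm, hc] at this; linarith
    · have := mul_le_mul_of_nonneg_left ht.2 hlam.le
      rw [mul_add, mul_add, mul_left_comm, hc] at this; linarith
  have a2 : (i : ℝ) ≤ lam * (t' - x0) ∧ lam * (t' - x0) ≤ i + 1 := by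
    constructor
    · have := mul_le_mul_of_nonneg_left ht'.1 hlam.le
      rw [mul_add, mul_left_comm, hc] at this; linarith
    · have := mul_le_mul_of_nonneg_left ht'.2 hlam.le
      rw [mul_add, mul_add, mul_left_comm, hc] at this; linarith
  have b1 : 4 * (lam * d) ≤ |lam * (t' - x0)| := by
    rw [abs_mul, abs_of_pos hlam]; nlinarith
  have b2 : |lam * (ξ - x0)| ≤ lam * d := by
    rw [abs_mul, abs_of_pos hlam]; gcongr
  have b3 : lam * |ξ - t| = |lam * (ξ - x0) - lam * (t - x0)| := by
    rw [← mul_sub, abs_mul, abs_of_pos hlam]; congr 2; ring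
  rw [b3]
  generalize lam * (ξ - x0) = p at *
  generalize lam * (t - x0) = r at *
  generalize lam * (t' - x0) = r' at *
  generalize lam * d = e at *
  generalize (i : ℝ) = j at *
  have c1 : |r - r'| ≤ 1 := abs_le.2 ⟨by linarith, by linarith⟩
  have c2 : |r'| ≤ |r| + 1 := by
    have := abs_sub_abs_le_abs_sub r' r; rw [abs_sub_comm] at this; linarith
  have c3 : |r| - |p| ≤ |p - r| := by
    have := abs_sub_abs_le_abs_sub r p; rwa [abs_sub_comm] at this
  have c4 : |j| ≤ |r| + 1 := by
    have := abs_sub_abs_le_abs_sub j r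
    have : |j - r| ≤ 1 := abs_le.2 ⟨by linarith, by linarith⟩
    linarith
  have c5 := abs_nonneg r
  linarith

lemma rotConv_eq (φ f : ℝ → ℂ) (a b y : ℝ) :
    rotConv φ a b f y = ∫ t, ((b - a : ℝ) : ℂ) * φ ((b - a) * (y - t)) * (e2pi (-(a * t)) * f t) := by
  unfold rotConv conv phim
  rw [← integral_const_mul]
  congr 1; ext t
  have : e2pi (-(a * t)) = e2pi (-(a * y)) * e2pi (a * (y - t)) := by
    rw [← e2pi_add]; congr 1; ring
  rw [this]; ring

lemma integrable_rot (φ : SchwartzMap ℝ ℂ) {f : ℝ → ℂ} (hf : Cls f) (a b y : ℝ) :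
    Integrable fun t => ((b - a : ℝ) : ℂ) * φ ((b - a) * (y - t)) * (e2pi (-(a * t)) * f t) := by
  obtain ⟨D, hD0, hD⟩ := schwartz_decay φ 0
  have hg : Integrable fun t => e2pi (-(a * t)) * f t := by
    refine hf.int.bdd_mul (c := 1) (continuous_e2pi.comp (by fun_prop)).aestronglyMeasurable ?_
    exact Filter.Eventually.of_forall fun t => (norm_e2pi _).le
  refine hg.bdd_mul (c := |b - a| * D) ?_ ?_
  · have : Continuous fun t => φ ((b - a) * (y - t)) := φ.continuous.comp (by fun_prop)
    exact (continuous_const.mul this).aestronglyMeasurable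
  · refine Filter.Eventually.of_forall fun t => ?_
    rw [norm_mul, Complex.norm_real, Real.norm_eq_abs]
    gcongr
    simpa using hD ((b - a) * (y - t))

/-- estimate on a single piece -/
lemma piece_est (φ : SchwartzMap ℝ ℂ) : ∃ D : ℝ, 0 < D ∧ ∀ (N : ℕ) (a b : Fin N → ℝ) (M : Finset (Fin N)) (lam : ℝ),
    0 < lam → (∀ m ∈ M, lam ≤ b m - a m ∧ b m - a m ≤ 2 * lam) →
    (∀ m m', m ≠ m' → Disjoint (Set.Icc (a m) (b m)) (Set.Icc (a m') (b m'))) →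
    ∀ f, Cls f → ∀ x0 d y y' : ℝ, 0 < d → (∀ t, |t - x0| < 4 * d → f t = 0) → y ∈ Metric.ball x0 d →
    y' ∈ Metric.ball x0 d → ∀ i : ℤ,
    ∑ m ∈ M, ‖∫ t in Ioc (x0 + i * lam⁻¹) (x0 + i * lam⁻¹ + lam⁻¹),
      (((b m - a m : ℝ) : ℂ) * φ ((b m - a m) * (y - t)) * (e2pi (-(a m * t)) * f t) -
       ((b m - a m : ℝ) : ℂ) * φ ((b m - a m) * (y' - t)) * (e2pi (-(a m * t)) * f t))‖ₑ ^ 2 ≤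
      ENNReal.ofReal (D * (lam ^ 3 * d ^ 2) / (1 + |(i : ℝ)|) ^ 6) *
        ∫⁻ t in Ioc (x0 + i * lam⁻¹) (x0 + i * lam⁻¹ + lam⁻¹), ‖f t‖ₑ ^ 2 := by
  obtain ⟨D1, hD10, hD1⟩ := schwartz_decay (SchwartzMap.derivCLM ℝ ℂ φ) 3
  obtain ⟨D2, hD20, hD2⟩ := schwartz_decay (SchwartzMap.derivCLM ℝ ℂ (SchwartzMap.derivCLM ℝ ℂ φ)) 3
  set φ' := SchwartzMap.derivCLM ℝ ℂ φ with hφ'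
  set E := max D1 D2 with hE
  have hE0 : 0 < E := lt_max_of_lt_left hD10
  refine ⟨4 * (5120 * E) ^ 2, by positivity, ?_⟩
  intro N a b M lam hlam hM hdisj f hf x0 d y y' hd hf0 hy hy' i
  set l := x0 + i * lam⁻¹ with hl
  by_cases hmeet : ∃ t' ∈ Ioc l (l + lam⁻¹), 4 * d ≤ |t' - x0|
  swap
  · push Not at hmeet
    have : ∀ m, ∫ t in Ioc l (l + lam⁻¹),
      (((b m - a m : ℝ) : ℂ) * φ ((b m - a m) * (y - t)) * (e2pi (-(a m * t)) * f t) -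
       ((b m - a m : ℝ) : ℂ) * φ ((b m - a m) * (y' - t)) * (e2pi (-(a m * t)) * f t)) = 0 := by
      intro m
      rw [setIntegral_congr_fun (g := fun _ => (0:ℂ)) measurableSet_Ioc]
      · simp
      · intro t ht
        simp [hf0 t (hmeet t ht)]
    simp only [this]
    simp
  obtain ⟨t', ht', h4⟩ := hmeet
  obtain ⟨B, hB⟩ := hf.bdd
  set T := 1 + |(i : ℝ)| with hT
  have hT0 : 0 < T := by positivity
  have hR : ∀ t ∈ Icc l (l + lam⁻¹), ∀ ξ ∈ Metric.ball x0 d, T / 4 ≤ 1 + lam * |ξ - t| := fun t ht ξ hξ =>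
    geom hlam ht (Ioc_subset_Icc_self ht') h4 hξ
  let n : Fin N → ℤ := fun m => ⌊a m / lam⌋
  let th : Fin N → ℝ := fun m => a m - n m * lam
  have hth : ∀ m, 0 ≤ th m ∧ th m ≤ lam := by
    intro m
    have h1 := Int.floor_le (a m / lam)
    have h2 := (Int.lt_floor_add_one (a m / lam)).le
    rw [le_div_iff₀ hlam] at h1
    rw [div_le_iff₀ hlam] at h2
    constructor <;> simp only [th, n] <;> linarith
  have hinj : Set.InjOn n M := by
    have aux : ∀ m ∈ M, ∀ m', n m = n m' → a m ≤ a m' → a m' ≤ b m' → m = m' := by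
      intro m hm m' hnn hle hb'
      by_contra hne
      refine Set.disjoint_left.1 (hdisj m m' hne) (show a m' ∈ Icc (a m) (b m) from ⟨hle, ?_⟩) ⟨le_rfl, hb'⟩
      have h1 := hth m
      have h2 := hth m'
      simp only [th] at h1 h2
      rw [hnn] at h1
      have := (hM m hm).1
      linarith
    intro m hm m' hm' hnn
    have e1 := (hM m hm).1
    have e2 := (hM m' hm').1
    rcases le_total (a m) (a m') with h | h
    · exact aux m hm m' hnn h (by linarith)
    · exact (aux m' hm' m hnn.symm h (by linarith)).symm
  let el : Fin N → ℝ := fun m => b m - a m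
  let A : Fin N → ℝ → ℂ := fun m t => (el m : ℂ) * (φ (el m * (y - t)) - φ (el m * (y' - t))) * e2pi (-th m * t)
  let A' : Fin N → ℝ → ℂ := fun m t =>
    (el m : ℂ) * (((-el m : ℝ) : ℂ) * φ' (el m * (y - t)) - ((-el m : ℝ) : ℂ) * φ' (el m * (y' - t))) * e2pi (-th m * t) +
    (el m : ℂ) * (φ (el m * (y - t)) - φ (el m * (y' - t))) * (2 * π * Complex.I * ((-th m : ℝ) : ℂ) * e2pi (-th m * t))
  have hA : ∀ m t, HasDerivAt (A m) (A' m t) t := by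
    intro m t
    have h1 : ∀ y : ℝ, HasDerivAt (fun t => φ (el m * (y - t))) (((-el m : ℝ) : ℂ) * φ' (el m * (y - t))) t := by
      intro y
      have h := (φ.hasDerivAt (el m * (y - t))).scomp t (((hasDerivAt_id t).const_sub y).const_mul (el m))
      simpa [Function.comp_def, hφ', SchwartzMap.derivCLM_apply] using h
    exact (((h1 y).sub (h1 y')).const_mul (el m : ℂ)).mul (hasDerivAt_e2pi (-th m) t)
  have hA'c : ∀ m, Continuous (A' m) := by
    intro m
    have c1 : ∀ (G : SchwartzMap ℝ ℂ) (y : ℝ), Continuous fun t => G (el m * (y - t)) := fun G y =>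
      G.continuous.comp (by fun_prop)
    have c2 : Continuous fun t => e2pi (-th m * t) := continuous_e2pi.comp (by fun_prop)
    have := c1 φ y; have := c1 φ y'; have := c1 φ' y; have := c1 φ' y'
    fun_prop
  have hd1 : ∀ x, ‖deriv φ x‖ * (1 + |x|) ^ 3 ≤ E := fun x => (hD1 x).trans (le_max_left _ _)
  have hd2 : ∀ x, ‖deriv φ' x‖ * (1 + |x|) ^ 3 ≤ E := fun x => (hD2 x).trans (le_max_right _ _)
  set W := 4 * lam * d * E / (T / 4) ^ 3 with hW
  have hW0 : 0 < W := by positivity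
  have b1 : ∀ m ∈ M, ∀ t ∈ Icc l (l + lam⁻¹), ‖φ (el m * (y - t)) - φ (el m * (y' - t))‖ ≤ W := fun m hm t ht =>
    schwartz_mv φ hE0 hd1 hlam (hM m hm).1 (hM m hm).2 (by positivity) (hR t ht) hy hy'
  have b2 : ∀ m ∈ M, ∀ t ∈ Icc l (l + lam⁻¹), ‖φ' (el m * (y - t)) - φ' (el m * (y' - t))‖ ≤ W := fun m hm t ht =>
    schwartz_mv φ' hE0 hd2 hlam (hM m hm).1 (hM m hm).2 (by positivity) (hR t ht) hy hy'
  have hel : ∀ m ∈ M, ‖(el m : ℂ)‖ ≤ 2 * lam := by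
    intro m hm
    rw [Complex.norm_real, Real.norm_of_nonneg (hlam.le.trans (hM m hm).1)]
    exact (hM m hm).2
  have key := bessel_amp hlam l hf.meas hB M n hinj A A' hA hA'c (κ := 20 * lam * W) (by positivity) ?_ ?_
  · refine le_trans (le_of_eq ?_) (key.trans (le_of_eq ?_))
    · refine Finset.sum_congr rfl fun m _ => ?_
      congr 2
      refine integral_congr_ae (Filter.Eventually.of_forall fun t => ?_)
      have : e2pi (-(a m * t)) = e2pi (-th m * t) * e2pi (-(n m * lam * t)) := by
        rw [← e2pi_add]; congr 1; simp only [th]; ring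
      simp only [A, this, el]
      ring
    · congr 1
      rw [show (4 : ℝ≥0∞) = ENNReal.ofReal 4 by simp, ← ENNReal.ofReal_mul (by norm_num)]
      congr 1
      rw [hW]
      field_simp
      ring
  · intro m hm
    have hlm : l ∈ Icc l (l + lam⁻¹) := ⟨le_rfl, by have := inv_pos.2 hlam; linarith⟩
    simp only [A]
    rw [norm_mul, norm_mul, norm_e2pi, mul_one]
    calc _ ≤ 2 * lam * W := mul_le_mul (hel m hm) (b1 m hm l hlm) (norm_nonneg _) (by positivity)
      _ ≤ _ := by nlinarith [mul_pos hlam hW0]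
  · intro m hm t ht
    have ht := Ioc_subset_Icc_self ht
    simp only [A']
    rw [← mul_sub]
    refine (norm_add_le _ _).trans ?_
    have e1 : ‖((-el m : ℝ) : ℂ)‖ ≤ 2 * lam := by
      rw [Complex.ofReal_neg, norm_neg]; exact hel m hm
    have e2 : ‖2 * (π : ℂ) * Complex.I * ((-th m : ℝ) : ℂ) * e2pi (-th m * t)‖ ≤ 8 * lam := by
      rw [norm_mul, norm_e2pi, mul_one, norm_mul, norm_mul, norm_mul, Complex.norm_I, mul_one, Complex.norm_real,
        Complex.norm_real, norm_neg, Real.norm_of_nonneg (hth m).1, Real.norm_of_nonneg pi_pos.le, Complex.norm_ofNat]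
      have := (hth m).2
      have := (hth m).1
      have := pi_le_four
      have := pi_pos
      nlinarith
    have f1 : ‖(el m : ℂ) * (((-el m : ℝ) : ℂ) * (φ' (el m * (y - t)) - φ' (el m * (y' - t)))) * e2pi (-th m * t)‖ ≤
        2 * lam * (2 * lam * W) := by
      rw [norm_mul, norm_e2pi, mul_one, norm_mul, norm_mul]
      exact mul_le_mul (hel m hm) (mul_le_mul e1 (b2 m hm t ht) (norm_nonneg _) (by positivity)) (by positivity)
        (by positivity)
    have f2 : ‖(el m : ℂ) * (φ (el m * (y - t)) - φ (el m * (y' - t))) *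
        (2 * π * Complex.I * ((-th m : ℝ) : ℂ) * e2pi (-th m * t))‖ ≤ 2 * lam * W * (8 * lam) := by
      rw [norm_mul, norm_mul]
      exact mul_le_mul (mul_le_mul (hel m hm) (b1 m hm t ht) (norm_nonneg _) (by positivity)) e2 (by positivity)
        (by positivity)
    refine (add_le_add f1 f2).trans (le_of_eq ?_)
    ring

lemma sum_T_ne_top : ∑' i : ℤ, ENNReal.ofReal (1 + |(i : ℝ)|)⁻¹ ^ 2 ≠ ∞ := by
  have hs : Summable fun i : ℤ => ((1 + |(i : ℝ)|)⁻¹) ^ 2 := by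
    have h1 : Summable fun n : ℕ => ((1 + (n : ℝ))⁻¹) ^ 2 := by
      have := (summable_nat_add_iff (f := fun n : ℕ => 1 / (n : ℝ) ^ 2) 1).2 (Real.summable_one_div_nat_pow.2 (by norm_num))
      refine this.congr fun n => ?_
      push_cast
      rw [inv_pow, one_div, add_comm]
    refine Summable.of_nat_of_neg ?_ ?_
    · simpa using h1
    · simpa using h1
  have : ∀ i : ℤ, ENNReal.ofReal (1 + |(i : ℝ)|)⁻¹ ^ 2 = ENNReal.ofReal (((1 + |(i : ℝ)|)⁻¹) ^ 2) := fun i => by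
    rw [ENNReal.ofReal_pow (by positivity)]
  simp_rw [this]
  rw [← ENNReal.ofReal_tsum_of_nonneg (fun i => by positivity) hs]
  exact ENNReal.ofReal_ne_top

lemma group_est (φ : SchwartzMap ℝ ℂ) : ∃ C : ℝ≥0, ∀ (N : ℕ) (a b : Fin N → ℝ) (M : Finset (Fin N)) (lam : ℝ),
    0 < lam → (∀ m ∈ M, lam ≤ b m - a m ∧ b m - a m ≤ 2 * lam) →
    (∀ m m', m ≠ m' → Disjoint (Set.Icc (a m) (b m)) (Set.Icc (a m') (b m'))) →
    ∀ f, Cls f → ∀ x0 d y y' : ℝ, 0 < d → (∀ t, |t - x0| < 4 * d → f t = 0) → y ∈ Metric.ball x0 d →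
    y' ∈ Metric.ball x0 d →
    ∑ m ∈ M, ‖rotConv φ (a m) (b m) f y - rotConv φ (a m) (b m) f y'‖ₑ ^ 2 ≤
      C * ∫⁻ t, ‖f t‖ₑ ^ 2 * ENNReal.ofReal (lam ^ 3 * d ^ 2 / (1 + lam * |t - x0|) ^ 4) := by
  obtain ⟨D, hD0, hD⟩ := piece_est φ
  obtain ⟨S, hS⟩ : ∃ S : ℝ≥0, ∑' i : ℤ, ENNReal.ofReal (1 + |(i : ℝ)|)⁻¹ ^ 2 = S :=
    ⟨_, (ENNReal.coe_toNNReal sum_T_ne_top).symm⟩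
  refine ⟨S * (16 * D.toNNReal), ?_⟩
  intro N a b M lam hlam hM hdisj f hf x0 d y y' hd hf0 hy hy'
  have hP := hD N a b M lam hlam hM hdisj f hf x0 d y y' hd hf0 hy hy'
  let L : ℤ → Set ℝ := fun i => Ioc (x0 + i * lam⁻¹) (x0 + i * lam⁻¹ + lam⁻¹)
  have hLeq : ∀ i : ℤ, L i = Ioc (x0 + i • lam⁻¹) (x0 + (i + 1) • lam⁻¹) := by
    intro i; simp only [L, zsmul_eq_mul]; push_cast; congr 1; ring
  have hLu : ⋃ i, L i = univ := by
    simp_rw [hLeq]; exact iUnion_Ioc_add_zsmul (inv_pos.2 hlam) x0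
  have hLd : Pairwise (Disjoint on L) := by
    have := pairwise_disjoint_Ioc_add_zsmul x0 lam⁻¹
    have e : L = fun i : ℤ => Ioc (x0 + i • lam⁻¹) (x0 + (i + 1) • lam⁻¹) := funext hLeq
    rw [e]; exact this
  have hLm : ∀ i, MeasurableSet (L i) := fun i => measurableSet_Ioc
  let F : Fin N → ℝ → ℂ := fun m t =>
    (((b m - a m : ℝ) : ℂ) * φ ((b m - a m) * (y - t)) * (e2pi (-(a m * t)) * f t) -
       ((b m - a m : ℝ) : ℂ) * φ ((b m - a m) * (y' - t)) * (e2pi (-(a m * t)) * f t))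
  have hFi : ∀ m, Integrable (F m) := fun m => (integrable_rot φ hf _ _ _).sub (integrable_rot φ hf _ _ _)
  have hFr : ∀ m, rotConv φ (a m) (b m) f y - rotConv φ (a m) (b m) f y' = ∑' i, ∫ t in L i, F m t := by
    intro m
    rw [rotConv_eq, rotConv_eq, ← integral_sub (integrable_rot φ hf _ _ _) (integrable_rot φ hf _ _ _),
      ← setIntegral_univ, ← hLu]
    exact integral_iUnion hLm hLd (hFi m).integrableOn
  let T : ℤ → ℝ := fun i => 1 + |(i : ℝ)|
  have hT : ∀ i, 0 < T i := fun i => by simp only [T]; positivity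
  have h1 : ∀ m, ‖rotConv φ (a m) (b m) f y - rotConv φ (a m) (b m) f y'‖ₑ ^ 2 ≤
      S * ∑' i, ENNReal.ofReal (T i) ^ 2 * ‖∫ t in L i, F m t‖ₑ ^ 2 := by
    intro m
    rw [hFr m]
    refine (pow_le_pow_left₀ zero_le enorm_tsum_le_tsum_enorm 2).trans ?_
    have := cs_tsum (fun i : ℤ => ENNReal.ofReal (T i)⁻¹) (fun i => ENNReal.ofReal (T i) * ‖∫ t in L i, F m t‖ₑ)
    simp only [← mul_assoc, ← ENNReal.ofReal_mul (inv_nonneg.2 (hT _).le), inv_mul_cancel₀ (hT _).ne', mul_pow] at this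
    simp only [ENNReal.ofReal_one, one_mul] at this
    rw [← hS]
    exact this
  refine (Finset.sum_le_sum fun m _ => h1 m).trans ?_
  rw [← Finset.mul_sum]
  push_cast
  rw [mul_assoc]
  refine mul_le_mul_right ?_ _
  rw [← Summable.tsum_finsetSum (fun _ _ => ENNReal.summable)]
  rw [← setLIntegral_univ, ← hLu, lintegral_iUnion hLm hLd, ← ENNReal.tsum_mul_left]
  refine ENNReal.tsum_le_tsum fun i => ?_
  rw [← Finset.mul_sum]
  refine (mul_le_mul_right (hP i) _).trans ?_
  rw [← mul_assoc, ← ENNReal.ofReal_pow (hT i).le, ← ENNReal.ofReal_mul (by positivity),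
    ← lintegral_const_mul' _ _ ENNReal.ofReal_ne_top, ← lintegral_const_mul' _ _ (by finiteness)]
  refine setLIntegral_mono' (hLm i) fun t ht => ?_
  rw [mul_left_comm (16 * (D.toNNReal : ℝ≥0∞)), mul_comm _ (‖f t‖ₑ ^ 2)]
  refine mul_le_mul_right ?_ _
  rw [show (16 : ℝ≥0∞) * (D.toNNReal : ℝ≥0∞) = ENNReal.ofReal (16 * D) by
    rw [ENNReal.ofReal_mul (by norm_num)]; simp [ENNReal.ofReal], ← ENNReal.ofReal_mul (by positivity)]
  refine ENNReal.ofReal_le_ofReal ?_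
  have hb : 1 + lam * |t - x0| ≤ 2 * T i := by
    have hc : lam * lam⁻¹ = 1 := mul_inv_cancel₀ hlam.ne'
    have a1 : (i : ℝ) ≤ lam * (t - x0) ∧ lam * (t - x0) ≤ i + 1 := by
      constructor
      · have := mul_le_mul_of_nonneg_left ht.1.le hlam.le
        rw [mul_add, mul_left_comm, hc] at this; linarith
      · have := mul_le_mul_of_nonneg_left ht.2 hlam.le
        rw [mul_add, mul_add, mul_left_comm, hc] at this; linarith
    have : |lam * (t - x0)| ≤ |(i : ℝ)| + 1 := by
      rw [abs_le]
      constructor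
      · have := neg_abs_le (i : ℝ); linarith
      · have := le_abs_self (i : ℝ); linarith
    rw [abs_mul, abs_of_pos hlam] at this
    simp only [T]
    have := abs_nonneg (i : ℝ)
    linarith
  have hT' := hT i
  have hp : 0 < 1 + lam * |t - x0| := by positivity
  calc T i ^ 2 * (D * (lam ^ 3 * d ^ 2) / (1 + |(i : ℝ)|) ^ 6) = 16 * D * (lam ^ 3 * d ^ 2 / (2 * T i) ^ 4) := by
        simp only [T] at hT' ⊢; field_simp; ring
    _ ≤ _ := by gcongr

lemma sum_two_ne_top : ∑' n : ℤ, ENNReal.ofReal (8 * (1 / 2) ^ n.natAbs) ≠ ∞ := by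
  have h1 : Summable fun n : ℕ => (8 : ℝ) * (1 / 2) ^ n := (summable_geometric_two).mul_left 8
  have hs : Summable fun n : ℤ => (8 : ℝ) * (1 / 2) ^ n.natAbs := by
    refine Summable.of_nat_of_neg ?_ ?_
    · simpa using h1
    · simpa using h1
  rw [← ENNReal.ofReal_tsum_of_nonneg (fun i => by positivity) hs]
  exact ENNReal.ofReal_ne_top

lemma weight_sum : ∃ C : ℝ≥0, ∀ R : ℝ, 0 < R →
    ∑' k : ℤ, ENNReal.ofReal (((2 : ℝ) ^ k) ^ 3 / (1 + (2 : ℝ) ^ k * R) ^ 4) ≤ C * ENNReal.ofReal (1 / R ^ 3) := by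
  refine ⟨(∑' n : ℤ, ENNReal.ofReal (8 * (1 / 2) ^ n.natAbs)).toNNReal, fun R hR => ?_⟩
  rw [ENNReal.coe_toNNReal sum_two_ne_top, ← ENNReal.tsum_mul_right]
  obtain ⟨k0, hk1, hk2⟩ := exists_mem_Ico_zpow (inv_pos.2 hR) (y := (2 : ℝ)) (by norm_num)
  rw [← (Equiv.addRight k0).tsum_eq]
  refine ENNReal.tsum_le_tsum fun n => ?_
  rw [← ENNReal.ofReal_mul (by positivity)]
  refine ENNReal.ofReal_le_ofReal ?_
  simp only [Equiv.coe_addRight]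
  rw [zpow_add₀ (by norm_num)]
  set v := (2 : ℝ) ^ k0 * R with hv
  have hv1 : v ≤ 1 := by
    have := mul_le_mul_of_nonneg_right hk1 hR.le
    rwa [inv_mul_cancel₀ hR.ne'] at this
  have hv2 : 1 ≤ 2 * v := by
    have := mul_lt_mul_of_pos_right hk2 hR
    rw [inv_mul_cancel₀ hR.ne', zpow_add₀ (by norm_num)] at this
    rw [hv]
    norm_num at this
    linarith
  have hv0 : 0 < v := by positivity
  have e : ((2 : ℝ) ^ n * 2 ^ k0) ^ 3 / (1 + 2 ^ n * 2 ^ k0 * R) ^ 4 =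
      ((2 : ℝ) ^ n * v) ^ 3 / (1 + 2 ^ n * v) ^ 4 * (1 / R ^ 3) := by
    rw [hv]; field_simp
  rw [e]
  refine mul_le_mul_of_nonneg_right ?_ (by positivity)
  have hz : (0 : ℝ) < 2 ^ n := by positivity
  set u := (2 : ℝ) ^ n * v with hu
  have hu0 : 0 < u := by positivity
  rw [div_le_iff₀ (by positivity)]
  rcases le_total 0 n with hn | hn
  · obtain ⟨m, rfl⟩ := Int.eq_ofNat_of_zero_le hn
    simp only [Int.natAbs_natCast, zpow_natCast] at *
    rw [one_div, inv_pow]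
    have h2 : (2 : ℝ) ^ m ≤ 2 * u := by nlinarith
    have h3 : u ^ 4 ≤ (1 + u) ^ 4 := by gcongr; linarith
    rw [← div_eq_mul_inv, div_mul_eq_mul_div, le_div_iff₀ hz]
    calc u ^ 3 * 2 ^ m ≤ u ^ 3 * (2 * u) := by gcongr
      _ ≤ 8 * u ^ 4 := by nlinarith [pow_pos hu0 4]
      _ ≤ _ := by gcongr
  · obtain ⟨m, rfl⟩ : ∃ m : ℕ, n = -m := ⟨n.natAbs, by omega⟩
    simp only [Int.natAbs_neg, Int.natAbs_natCast, zpow_neg, zpow_natCast] at *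
    have h1 : (1 : ℝ) ≤ (1 + u) ^ 4 := one_le_pow₀ (by linarith)
    have h4 : ((2 : ℝ) ^ m)⁻¹ ≤ 1 := inv_le_one_of_one_le₀ (one_le_pow₀ (by norm_num))
    have h2 : u ≤ ((2 : ℝ) ^ m)⁻¹ := by nlinarith
    rw [one_div, inv_pow]
    have h3 : u ^ 3 ≤ ((2 : ℝ) ^ m)⁻¹ := by
      calc u ^ 3 ≤ (((2 : ℝ) ^ m)⁻¹) ^ 3 := by gcongr
        _ ≤ (((2 : ℝ) ^ m)⁻¹) ^ 1 := pow_le_pow_of_le_one hz.le h4 (by norm_num)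
        _ = _ := pow_one _
    nlinarith

/-- the weight -/
noncomputable def Wt (x0 d : ℝ) (t : ℝ) : ℝ≥0∞ :=
  {t | 4 * d ≤ |t - x0|}.indicator (fun t => ENNReal.ofReal (d ^ 2 / |t - x0| ^ 3)) t

lemma measurable_Wt (x0 d : ℝ) : Measurable (Wt x0 d) := by
  unfold Wt
  refine Measurable.indicator ?_ ?_
  · refine Measurable.ennreal_ofReal ?_
    fun_prop
  · exact measurableSet_le measurable_const (by fun_prop)

lemma weight_MF : ∃ C : ℝ≥0, ∀ (h : ℝ → ℝ≥0∞), Measurable h → ∀ x0 d : ℝ, 0 < d →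
    ∫⁻ t, h t * Wt x0 d t ≤ C * MF h x0 := by
  have hfin : ∑' i : ℕ, ENNReal.ofReal (4 * (1 / 4) ^ i) ≠ ∞ := by
    have h1 : Summable fun n : ℕ => (4 : ℝ) * (1 / 4) ^ n :=
      (summable_geometric_of_lt_one (by norm_num) (by norm_num)).mul_left 4
    rw [← ENNReal.ofReal_tsum_of_nonneg (fun i => by positivity) h1]
    exact ENNReal.ofReal_ne_top
  refine ⟨(∑' i : ℕ, ENNReal.ofReal (4 * (1 / 4) ^ i)).toNNReal, fun h hm x0 d hd => ?_⟩
  rw [ENNReal.coe_toNNReal hfin, ← ENNReal.tsum_mul_right]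
  have hpt : ∀ t, h t * Wt x0 d t ≤ ∑' i : ℕ, (Metric.ball x0 (2 ^ (i + 1) * d)).indicator
      (fun t => h t * ENNReal.ofReal ((1 / 8) ^ i / d)) t := by
    intro t
    by_cases ht : 4 * d ≤ |t - x0|
    swap
    · simp [Wt, indicator, ht]
    have h1 : 1 ≤ |t - x0| / d := by rw [le_div_iff₀ hd]; linarith
    obtain ⟨i, hi1, hi2⟩ := exists_nat_pow_near h1 (y := (2 : ℝ)) (by norm_num)
    rw [le_div_iff₀ hd] at hi1
    rw [div_lt_iff₀ hd] at hi2
    refine le_trans ?_ (ENNReal.le_tsum i)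
    rw [indicator_of_mem (by rw [Metric.mem_ball, Real.dist_eq]; exact hi2)]
    refine mul_le_mul_right ?_ _
    rw [Wt, indicator_of_mem (by exact ht)]
    refine ENNReal.ofReal_le_ofReal ?_
    have hpos : (0 : ℝ) < 2 ^ i * d := by positivity
    calc d ^ 2 / |t - x0| ^ 3 ≤ d ^ 2 / (2 ^ i * d) ^ 3 := by gcongr
      _ = _ := by
        rw [show (8 : ℝ) = 2 ^ 3 by norm_num, one_div, inv_pow, ← pow_mul, mul_comm 3 i, pow_mul]
        field_simp
  refine (lintegral_mono hpt).trans ?_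
  rw [lintegral_tsum]
  · refine ENNReal.tsum_le_tsum fun i => ?_
    rw [lintegral_indicator Metric.isOpen_ball.measurableSet, lintegral_mul_const' _ _ ENNReal.ofReal_ne_top]
    refine (mul_le_mul_left (lintegral_ball_le_MF h (x := x0) (Metric.mem_ball_self (by positivity))) _).trans_eq ?_
    rw [mul_right_comm, ← ENNReal.ofReal_mul (by positivity)]
    congr 2
    rw [show (1 / 8 : ℝ) ^ i = (1 / 4) ^ i * (1 / 2) ^ i by rw [← mul_pow]; norm_num]
    rw [one_div 2, inv_pow]
    field_simp
    ring
  · intro i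
    exact ((hm.mul_const _).indicator Metric.isOpen_ball.measurableSet).aemeasurable

lemma diff_est (φ : SchwartzMap ℝ ℂ) : ∃ C : ℝ≥0, ∀ (N : ℕ) (a b : Fin N → ℝ), (∀ m, a m < b m) →
    (∀ m m', m ≠ m' → Disjoint (Set.Icc (a m) (b m)) (Set.Icc (a m') (b m'))) →
    ∀ f, Cls f → ∀ x0 d y y' : ℝ, 0 < d → (∀ t, |t - x0| < 4 * d → f t = 0) → y ∈ Metric.ball x0 d →
    y' ∈ Metric.ball x0 d →
    ∑ m, ‖rotConv φ (a m) (b m) f y - rotConv φ (a m) (b m) f y'‖ₑ ^ 2 ≤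
      C * ∫⁻ t, ‖f t‖ₑ ^ 2 * Wt x0 d t := by
  obtain ⟨C1, hC1⟩ := group_est φ
  obtain ⟨C2, hC2⟩ := weight_sum
  refine ⟨C1 * C2, ?_⟩
  intro N a b hab hdisj f hf x0 d y y' hd hf0 hy hy'
  classical
  let k : Fin N → ℤ := fun m => Int.log 2 (b m - a m)
  rw [← Finset.sum_fiberwise_of_maps_to (s := Finset.univ) (t := Finset.univ.image k) (g := k)
    (fun m _ => Finset.mem_image_of_mem _ (Finset.mem_univ m))]
  have h1 : ∀ j ∈ Finset.univ.image k, ∑ m with k m = j,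
      ‖rotConv φ (a m) (b m) f y - rotConv φ (a m) (b m) f y'‖ₑ ^ 2 ≤
      C1 * ∫⁻ t, ‖f t‖ₑ ^ 2 * ENNReal.ofReal (((2 : ℝ) ^ j) ^ 3 * d ^ 2 / (1 + (2 : ℝ) ^ j * |t - x0|) ^ 4) := by
    intro j _
    refine hC1 N a b _ ((2 : ℝ) ^ j) (by positivity) ?_ hdisj f hf x0 d y y' hd hf0 hy hy'
    intro m hm
    have hm : k m = j := by simpa using hm
    have p := Int.zpow_log_le_self (b := 2) (r := b m - a m) (by norm_num) (by linarith [hab m])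
    have p2 := Int.lt_zpow_succ_log_self (b := 2) (by norm_num) (b m - a m)
    simp only [k] at hm
    rw [hm] at p p2
    push_cast at p p2
    rw [zpow_add_one₀ (by norm_num)] at p2
    exact ⟨p, by linarith⟩
  refine (Finset.sum_le_sum h1).trans ?_
  rw [← Finset.mul_sum, ← lintegral_finsetSum]
  · push_cast
    rw [mul_assoc]
    refine mul_le_mul_right ?_ _
    rw [← lintegral_const_mul' _ _ ENNReal.coe_ne_top]
    refine lintegral_mono fun t => ?_
    rw [← Finset.mul_sum]
    by_cases ht : |t - x0| < 4 * d
    · simp [hf0 t ht]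
    push Not at ht
    rw [mul_left_comm]
    refine mul_le_mul_right ?_ _
    have hR : 0 < |t - x0| := by linarith
    refine (ENNReal.sum_le_tsum _).trans ?_
    have := mul_le_mul_left (hC2 _ hR) (ENNReal.ofReal (d ^ 2))
    rw [← ENNReal.tsum_mul_right] at this
    refine le_trans (le_of_eq ?_) (this.trans (le_of_eq ?_))
    · congr 1; ext j
      rw [← ENNReal.ofReal_mul (by positivity)]; congr 1; ring
    · rw [Wt, indicator_of_mem (by exact ht), mul_assoc, ← ENNReal.ofReal_mul (by positivity)]
      congr 2; ring
  · intro j _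
    refine (hf.meas.enorm.pow_const 2).mul ?_
    refine Measurable.ennreal_ofReal ?_
    fun_prop

lemma diff_est_q (φ : SchwartzMap ℝ ℂ) (q : ℝ) (hq : 2 ≤ q) : ∃ C : ℝ≥0, ∀ (N : ℕ) (a b : Fin N → ℝ), (∀ m, a m < b m) →
    (∀ m m', m ≠ m' → Disjoint (Set.Icc (a m) (b m)) (Set.Icc (a m') (b m'))) →
    ∀ f, Cls f → ∀ x0 d y y' : ℝ, 0 < d → (∀ t, |t - x0| < 4 * d → f t = 0) → y ∈ Metric.ball x0 d →
    y' ∈ Metric.ball x0 d →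
    (∑ m, ‖rotConv φ (a m) (b m) f y - rotConv φ (a m) (b m) f y'‖ₑ ^ 2) ^ (q / 2) ≤
      C * ∫⁻ t, ‖f t‖ₑ ^ q * Wt x0 d t := by
  obtain ⟨C1, hC1⟩ := diff_est φ
  obtain ⟨C2, hC2⟩ := weight_MF
  have hq0 : 0 < q := by linarith
  have he : 0 ≤ 1 / 2 - 1 / q := by
    have := one_div_le_one_div_of_le (by norm_num) hq; linarith
  refine ⟨C1 ^ (q / 2) * C2 ^ ((1 / 2 - 1 / q) * q), ?_⟩
  intro N a b hab hdisj f hf x0 d y y' hd hf0 hy hy'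
  have h1 := hC1 N a b hab hdisj f hf x0 d y y' hd hf0 hy hy'
  refine (ENNReal.rpow_le_rpow h1 (by positivity)).trans ?_
  set ν := volume.withDensity (Wt x0 d) with hν
  have hu : ν univ ≤ C2 := by
    have := hC2 (fun _ => 1) measurable_const x0 d hd
    simp only [one_mul] at this
    rw [hν, withDensity_apply _ MeasurableSet.univ, setLIntegral_univ]
    refine this.trans ?_
    calc _ ≤ (C2 : ℝ≥0∞) * 1 := mul_le_mul_right (MF_le_of_le (fun _ => le_rfl) _) _
      _ = _ := mul_one _
  have hintg : ∀ r : ℝ, ∫⁻ t, ‖f t‖ₑ ^ r * Wt x0 d t = ∫⁻ t, ‖f t‖ₑ ^ r ∂ν := by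
    intro r
    rw [hν, lintegral_withDensity_eq_lintegral_mul _ (measurable_Wt _ _) (hf.meas.enorm.pow_const r)]
    exact lintegral_congr fun t => mul_comm _ _
  have h2 := eLpNorm'_le_eLpNorm'_mul_rpow_measure_univ (μ := ν) (f := f) (p := 2) (q := q) (by norm_num) hq
    hf.meas.aestronglyMeasurable
  rw [eLpNorm'_eq_lintegral_enorm, eLpNorm'_eq_lintegral_enorm, ← hintg, ← hintg] at h2
  simp only [ENNReal.rpow_two] at h2
  have h3 := ENNReal.rpow_le_rpow h2 hq0.le
  rw [← ENNReal.rpow_mul, ENNReal.mul_rpow_of_nonneg _ _ hq0.le, ← ENNReal.rpow_mul, ← ENNReal.rpow_mul,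
    one_div_mul_cancel hq0.ne', ENNReal.rpow_one] at h3
  rw [ENNReal.mul_rpow_of_nonneg _ _ (by positivity)]
  rw [show (1 / 2 : ℝ) * q = q / 2 by ring] at h3
  push_cast
  rw [mul_assoc, ENNReal.coe_rpow_of_nonneg _ (by positivity), ENNReal.coe_rpow_of_nonneg _ (by positivity)]
  refine mul_le_mul_right (h3.trans ?_) _
  rw [mul_comm]
  refine mul_le_mul_left ?_ _
  exact ENNReal.rpow_le_rpow hu (by positivity)

/-- the square function -/
noncomputable def SF {N : ℕ} (φ : ℝ → ℂ) (a b : Fin N → ℝ) (f : ℝ → ℂ) (x : ℝ) : ℝ≥0∞ :=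
  (∑ m, ‖conv f (phim φ (a m) (b m)) x‖ₑ ^ 2) ^ (1 / 2 : ℝ)

lemma enorm_rotConv (φ f : ℝ → ℂ) (a b x : ℝ) : ‖rotConv φ a b f x‖ₑ = ‖conv f (phim φ a b) x‖ₑ := by
  rw [rotConv, enorm_mul, enorm_e2pi, one_mul]

/-- `phim` as a Schwartz map with known Fourier transform -/
lemma phim_schwartz (φ : SchwartzMap ℝ ℂ) (a b : ℝ) (hab : a < b) :
    ∃ G : SchwartzMap ℝ ℂ, (∀ x, G x = phim φ a b x) ∧
      ∀ ξ, (𝓕 G) ξ = (𝓕 φ) ((ξ - a) * (b - a)⁻¹) := by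
  have hc : (b - a)⁻¹ ≠ 0 := inv_ne_zero (by linarith)
  let K : SchwartzMap ℝ ℂ := SchwartzMap.compSubConstCLM ℝ a
    (SchwartzMap.compCLMOfContinuousLinearEquiv ℝ
      (ContinuousLinearEquiv.unitsEquivAut ℝ (Units.mk0 _ hc)) (𝓕 φ))
  have hK : ∀ ξ, K ξ = (𝓕 φ) ((ξ - a) * (b - a)⁻¹) := fun ξ => by
    simp [K]
  refine ⟨𝓕⁻ K, ?_, ?_⟩
  · intro x
    rw [SchwartzMap.fourierInv_coe, Real.fourierInv_eq', phim]
    simp_rw [hK]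
    have h1 : φ ((b - a) * x) = (𝓕⁻ (𝓕 φ)) ((b - a) * x) := by simp
    rw [h1, SchwartzMap.fourierInv_coe, Real.fourierInv_eq']
    have hd : 0 < b - a := by linarith
    have h2 := integral_sub_right_eq_self (μ := volume) (fun ξ : ℝ => Complex.exp (↑(2 * π * inner ℝ (ξ + a) x) * Complex.I) • (𝓕 φ) (ξ * (b - a)⁻¹)) a
    simp only [sub_add_cancel] at h2
    rw [h2]
    have h3 := Measure.integral_comp_mul_right (fun η : ℝ => Complex.exp (↑(2 * π * inner ℝ (η * (b - a) + a) x) * Complex.I) • (𝓕 φ) η) ((b - a)⁻¹)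
    simp only [inv_mul_cancel_right₀ hd.ne'] at h3
    rw [h3, inv_inv, abs_of_pos hd, Complex.real_smul, mul_assoc]
    congr 1
    rw [← integral_const_mul]
    refine integral_congr_ae (Filter.Eventually.of_forall fun η => ?_)
    simp only [smul_eq_mul, e2pi, RCLike.inner_apply, conj_trivial]
    rw [← mul_assoc (Complex.exp (2 * ↑π * Complex.I * ↑(a * x))), ← Complex.exp_add]
    congr 2
    push_cast; ring
  · intro ξ
    rw [FourierTransform.fourier_fourierInv_eq, hK]

lemma conv_schwartz (f G : SchwartzMap ℝ ℂ) :
    ∃ H : SchwartzMap ℝ ℂ, (∀ x, H x = conv f G x) ∧ ∀ ξ, (𝓕 H) ξ = (𝓕 f) ξ * (𝓕 G) ξ := by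
  refine ⟨SchwartzMap.convolution (ContinuousLinearMap.mul ℂ ℂ) f G, ?_, ?_⟩
  · intro x
    rw [SchwartzMap.convolution_apply]; rfl
  · intro ξ
    rw [SchwartzMap.fourier_convolution]; simp

lemma plancherel_enn (f : SchwartzMap ℝ ℂ) : ∫⁻ ξ, ‖(𝓕 f) ξ‖ₑ ^ 2 = ∫⁻ x, ‖f x‖ₑ ^ 2 := by
  have key : ∀ g : SchwartzMap ℝ ℂ, ∫⁻ x, ‖g x‖ₑ ^ 2 = ENNReal.ofReal (∫ x, ‖g x‖ ^ 2) := by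
    intro g
    have hg : Integrable (fun x => ‖g x‖ ^ 2) :=
      (memLp_two_iff_integrable_sq_norm g.continuous.aestronglyMeasurable).1 (g.memLp 2)
    rw [ofReal_integral_eq_lintegral_ofReal hg (Filter.Eventually.of_forall fun x => by positivity)]
    refine lintegral_congr fun x => ?_
    rw [ENNReal.ofReal_pow (norm_nonneg _), ofReal_norm]
  rw [key, key, SchwartzMap.integral_norm_sq_fourier]

lemma L2_schwartz (φ : SchwartzMap ℝ ℂ) (hφ : Function.support (𝓕 ⇑φ) ⊆ Set.Ioo 0 1) :
    ∃ C : ℝ≥0, ∀ (N : ℕ) (a b : Fin N → ℝ), (∀ m, a m < b m) →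
      (∀ m m', m ≠ m' → Disjoint (Set.Icc (a m) (b m)) (Set.Icc (a m') (b m'))) →
      ∀ f : SchwartzMap ℝ ℂ,
      ∫⁻ x, ∑ m, ‖conv f (phim φ (a m) (b m)) x‖ₑ ^ 2 ≤ C * ∫⁻ x, ‖f x‖ₑ ^ 2 := by
  obtain ⟨D, hD0, hD⟩ := schwartz_decay (𝓕 φ) 0
  simp only [pow_zero, mul_one] at hD
  refine ⟨(Real.toNNReal D) ^ 2, ?_⟩
  intro N a b hab hdisj f
  choose G hG hGF using fun m => phim_schwartz φ (a m) (b m) (hab m)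
  choose H hH hHF using fun m => conv_schwartz f (G m)
  have hG' : ∀ m, (G m : ℝ → ℂ) = phim φ (a m) (b m) := fun m => funext (hG m)
  have e1 : ∀ x, ∑ m, ‖conv f (phim φ (a m) (b m)) x‖ₑ ^ 2 = ∑ m, ‖H m x‖ₑ ^ 2 := by
    intro x
    refine Finset.sum_congr rfl fun m _ => ?_
    rw [hH, hG']
  simp_rw [e1]
  rw [lintegral_finsetSum _ fun m _ => by have := (H m).continuous.measurable; fun_prop]
  rw [Finset.sum_congr rfl fun m _ => (plancherel_enn (H m)).symm, ← plancherel_enn f]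
  rw [← lintegral_finsetSum _ fun m _ => by have := (𝓕 (H m)).continuous.measurable; fun_prop]
  rw [← lintegral_const_mul' _ _ ENNReal.coe_ne_top]
  refine lintegral_mono fun ξ => ?_
  simp only
  have hsupp : ∀ m, (𝓕 (G m)) ξ ≠ 0 → ξ ∈ Icc (a m) (b m) := by
    intro m hm
    rw [hGF] at hm
    have h1 : (ξ - a m) * (b m - a m)⁻¹ ∈ Ioo (0:ℝ) 1 := hφ (by
      rw [Function.mem_support]; rwa [← SchwartzMap.fourier_coe])
    have hd : 0 < b m - a m := by linarith [hab m]
    rw [← div_eq_mul_inv] at h1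
    have h2 := (div_pos_iff_of_pos_right hd).1 h1.1
    have h3 := (div_lt_one hd).1 h1.2
    constructor <;> linarith
  have hb : ∀ m, ‖(𝓕 (H m)) ξ‖ₑ ^ 2 ≤ (((Real.toNNReal D) ^ 2 : ℝ≥0) : ℝ≥0∞) * ‖(𝓕 f) ξ‖ₑ ^ 2 := by
    intro m
    rw [hHF, enorm_mul, mul_pow, mul_comm, ENNReal.coe_pow]
    refine mul_le_mul_left (pow_le_pow_left' ?_ _) _
    rw [hGF, ← ofReal_norm]
    exact ENNReal.ofReal_le_ofReal (hD _)
  by_cases hz : ∃ m, (𝓕 (G m)) ξ ≠ 0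
  · obtain ⟨m, hm⟩ := hz
    rw [Finset.sum_eq_single m]
    · exact hb m
    · intro m' _ hne
      by_contra hcon
      have : (𝓕 (G m')) ξ ≠ 0 := by
        intro h0; apply hcon; rw [hHF, h0]; simp
      exact (Set.disjoint_left.1 (hdisj m' m hne)) (hsupp _ this) (hsupp _ hm)
    · simp
  · push Not at hz
    rw [Finset.sum_eq_zero]
    · exact zero_le
    · intro m _; rw [hHF, hz]; simp

lemma Cls.schwartz (f : SchwartzMap ℝ ℂ) : Cls f := by
  obtain ⟨D, _, hD⟩ := schwartz_decay f 0
  exact ⟨f.continuous.measurable, f.integrable, D, fun t => by simpa using hD t⟩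

lemma Cls.enn_bdd {f : ℝ → ℂ} (hf : Cls f) : ∃ B : ℝ≥0, ∀ t, ‖f t‖ₑ ≤ B := by
  obtain ⟨B, hB⟩ := hf.bdd
  refine ⟨B.toNNReal, fun t => ?_⟩
  rw [← ofReal_norm]
  exact ENNReal.ofReal_le_ofReal (hB t)

lemma Cls.lint {f : ℝ → ℂ} (hf : Cls f) {r : ℝ} (hr : 1 ≤ r) : ∫⁻ t, ‖f t‖ₑ ^ r ≠ ∞ := by
  obtain ⟨B, hB⟩ := hf.enn_bdd
  have h : ∀ t, ‖f t‖ₑ ^ r ≤ (B : ℝ≥0∞) ^ (r - 1) * ‖f t‖ₑ := by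
    intro t
    have : ‖f t‖ₑ ^ r = ‖f t‖ₑ ^ (r - 1) * ‖f t‖ₑ := by
      conv_rhs => rw [← ENNReal.rpow_one ‖f t‖ₑ, ← ENNReal.rpow_mul, mul_comm (1:ℝ), mul_one]
      rw [← ENNReal.rpow_add_of_nonneg _ _ (by linarith) zero_le_one, sub_add_cancel]
    rw [this]
    exact mul_le_mul_left (ENNReal.rpow_le_rpow (hB t) (by linarith)) _
  have hc : (B : ℝ≥0∞) ^ (r - 1) ≠ ∞ := ENNReal.rpow_ne_top_of_nonneg (by linarith) ENNReal.coe_ne_top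
  refine ne_top_of_le_ne_top ?_ (lintegral_mono h)
  rw [lintegral_const_mul' _ _ hc]
  exact ENNReal.mul_ne_top hc hf.int.2.ne

lemma Cls.integrable_mul {f : ℝ → ℂ} (hf : Cls f) (G : SchwartzMap ℝ ℂ) (x : ℝ) :
    Integrable (fun t => f t * G (x - t)) := by
  obtain ⟨D, _, hD⟩ := schwartz_decay G 0
  have hG : Continuous fun t => G (x - t) := G.continuous.comp (by fun_prop)
  exact hf.int.mul_bdd (c := D) hG.aestronglyMeasurable (Filter.Eventually.of_forall fun t => by simpa using hD (x - t))

lemma continuous_conv {f : ℝ → ℂ} (hf : Cls f) (G : SchwartzMap ℝ ℂ) : Continuous (conv f G) := by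
  obtain ⟨D, _, hD⟩ := schwartz_decay G 0
  have := BddAbove.continuous_convolution_right_of_integrable (ContinuousLinearMap.mul ℂ ℂ) (μ := volume)
    (f := f) (g := G) ⟨D, by rintro _ ⟨y, rfl⟩; simpa using hD y⟩ hf.int G.continuous
  exact this

lemma bdd_conv {f : ℝ → ℂ} (hf : Cls f) (G : SchwartzMap ℝ ℂ) : ∃ B : ℝ, ∀ x, ‖conv f G x‖ ≤ B := by
  obtain ⟨D, _, hD⟩ := schwartz_decay G 0
  refine ⟨∫ t, ‖f t‖ * D, fun x => ?_⟩
  refine norm_integral_le_of_norm_le (hf.int.norm.mul_const _) (Filter.Eventually.of_forall fun t => ?_)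
  rw [norm_mul]
  exact mul_le_mul_of_nonneg_left (by simpa using hD (x - t)) (norm_nonneg _)

lemma Cls.conv {f : ℝ → ℂ} (hf : Cls f) (G : SchwartzMap ℝ ℂ) : Cls (conv f G) :=
  ⟨(continuous_conv hf G).measurable,
    hf.int.integrable_convolution (ContinuousLinearMap.mul ℂ ℂ) G.integrable, bdd_conv hf G⟩

lemma conv_sub_sq {f g : ℝ → ℂ} (hf : Cls f) (hg : Cls g) (G : SchwartzMap ℝ ℂ) (x : ℝ) :
    ‖conv f G x - conv g G x‖ₑ ^ 2 ≤ (∫⁻ t, ‖f t - g t‖ₑ ^ 2) * ∫⁻ t, ‖G (x - t)‖ₑ ^ 2 := by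
  have h1 : _root_.conv f G x - _root_.conv g G x = ∫ t, (f t - g t) * G (x - t) := by
    rw [_root_.conv, _root_.conv, ← integral_sub (hf.integrable_mul G x) (hg.integrable_mul G x)]
    congr 1; ext t; ring
  have m1 := hf.meas
  have m2 := hg.meas
  have m3 := G.continuous.measurable
  rw [h1]
  calc _ ≤ (∫⁻ t, ‖f t - g t‖ₑ * ‖G (x - t)‖ₑ) ^ 2 := by
        refine pow_le_pow_left' ((enorm_integral_le_lintegral_enorm _).trans_eq ?_) _
        simp_rw [enorm_mul]
    _ ≤ _ := cs_lintegral _ (by fun_prop) (by fun_prop)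

lemma Cls.memLp {f : ℝ → ℂ} (hf : Cls f) : MemLp f 2 := by
  refine ⟨hf.meas.aestronglyMeasurable, ?_⟩
  rw [eLpNorm_eq_lintegral_rpow_enorm_toReal (by norm_num) (by norm_num)]
  refine ENNReal.rpow_lt_top_of_nonneg (by positivity) (hf.lint (by norm_num))

lemma approx_schwartz {f : ℝ → ℂ} (hf : Cls f) : ∃ g : ℕ → SchwartzMap ℝ ℂ,
    Filter.Tendsto (fun n => ∫⁻ t, ‖g n t - f t‖ₑ ^ 2) Filter.atTop (nhds 0) := by
  have hd := SchwartzMap.denseRange_toLpCLM (E := ℝ) (F := ℂ) (p := 2) (by norm_num) (μ := volume)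
    (hf.memLp.toLp f)
  obtain ⟨u, hu, hlim⟩ := mem_closure_iff_seq_limit.1 hd
  choose g hg using hu
  refine ⟨g, ?_⟩
  rw [tendsto_iff_edist_tendsto_0] at hlim
  have h2 := ENNReal.Tendsto.pow (n := 2) hlim
  simp only [ne_eq, OfNat.ofNat_ne_zero, not_false_eq_true, zero_pow] at h2
  refine h2.congr fun n => ?_
  rw [← hg n, SchwartzMap.toLpCLM_apply, SchwartzMap.toLp, Lp.edist_toLp_toLp,
    eLpNorm_eq_lintegral_rpow_enorm_toReal (by norm_num) (by norm_num), ← ENNReal.rpow_two, ← ENNReal.rpow_mul]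
  norm_num

lemma L2_cls (φ : SchwartzMap ℝ ℂ) (hφ : Function.support (𝓕 ⇑φ) ⊆ Set.Ioo 0 1) :
    ∃ C : ℝ≥0, ∀ (N : ℕ) (a b : Fin N → ℝ), (∀ m, a m < b m) →
      (∀ m m', m ≠ m' → Disjoint (Set.Icc (a m) (b m)) (Set.Icc (a m') (b m'))) →
      ∀ f : ℝ → ℂ, Cls f →
      ∫⁻ x, ∑ m, ‖conv f (phim φ (a m) (b m)) x‖ₑ ^ 2 ≤ C * ∫⁻ x, ‖f x‖ₑ ^ 2 := by
  obtain ⟨C, hC⟩ := L2_schwartz φ hφ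
  refine ⟨C * 2, ?_⟩
  intro N a b hab hdisj f hf
  obtain ⟨g, hg⟩ := approx_schwartz hf
  choose G hG hGF using fun m => phim_schwartz φ (a m) (b m) (hab m)
  have hG' : ∀ m, phim φ (a m) (b m) = G m := fun m => (funext (hG m)).symm
  have hC' := fun n => hC N a b hab hdisj (g n)
  simp_rw [hG'] at hC' ⊢
  have hpt : ∀ x m, Filter.Tendsto (fun n => conv (g n) (G m) x) Filter.atTop (nhds (conv f (G m) x)) := by
    intro x m
    rw [tendsto_iff_edist_tendsto_0]
    have hK : ∫⁻ t, ‖G m (x - t)‖ₑ ^ 2 ≠ ∞ := by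
      rw [lintegral_sub_left_eq_self (fun t => ‖G m t‖ₑ ^ 2) x]
      have := (Cls.schwartz (G m)).lint (r := 2) (by norm_num)
      simpa using this
    have h0 : Filter.Tendsto (fun n => ‖conv (g n) (G m) x - conv f (G m) x‖ₑ ^ 2) Filter.atTop (nhds 0) := by
      have h1 := ENNReal.Tendsto.mul_const hg (Or.inr hK)
      rw [zero_mul] at h1
      exact tendsto_of_tendsto_of_tendsto_of_le_of_le tendsto_const_nhds h1 (fun _ => zero_le)
        (fun n => conv_sub_sq (Cls.schwartz (g n)) hf (G m) x)
    have h2 := h0.ennrpow_const (1 / 2 : ℝ)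
    rw [ENNReal.zero_rpow_of_pos (by norm_num)] at h2
    refine h2.congr fun n => ?_
    rw [← ENNReal.rpow_two, ← ENNReal.rpow_mul, edist_eq_enorm_sub]
    norm_num
  have hpt2 : ∀ x, Filter.Tendsto (fun n => ∑ m, ‖conv (g n) (G m) x‖ₑ ^ 2) Filter.atTop
      (nhds (∑ m, ‖conv f (G m) x‖ₑ ^ 2)) := by
    intro x
    refine tendsto_finsetSum _ fun m _ => ?_
    exact ENNReal.Tendsto.pow (hpt x m).enorm
  calc ∫⁻ x, ∑ m, ‖conv f (G m) x‖ₑ ^ 2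
      = ∫⁻ x, Filter.liminf (fun n => ∑ m, ‖conv (g n) (G m) x‖ₑ ^ 2) Filter.atTop :=
        lintegral_congr fun x => ((hpt2 x).liminf_eq).symm
    _ ≤ Filter.liminf (fun n => ∫⁻ x, ∑ m, ‖conv (g n) (G m) x‖ₑ ^ 2) Filter.atTop := by
        refine lintegral_liminf_le fun n => ?_
        refine Finset.measurable_sum _ fun m _ => ?_
        have := (continuous_conv (Cls.schwartz (g n)) (G m)).measurable
        fun_prop
    _ ≤ Filter.liminf (fun n => (C : ℝ≥0∞) * (2 * (∫⁻ t, ‖g n t - f t‖ₑ ^ 2) + 2 * ∫⁻ x, ‖f x‖ₑ ^ 2)) Filter.atTop := by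
        refine Filter.liminf_le_liminf (Filter.Eventually.of_forall fun n => (hC' n).trans ?_)
        refine mul_le_mul_right ?_ _
        have m1 := hf.meas
        have m2 := (g n).continuous.measurable
        rw [← lintegral_const_mul' _ _ (by norm_num), ← lintegral_const_mul' _ _ (by norm_num),
          ← lintegral_add_left (by fun_prop)]
        refine lintegral_mono fun t => ?_
        calc ‖g n t‖ₑ ^ 2 = ‖(g n t - f t) + f t‖ₑ ^ 2 := by rw [sub_add_cancel]
          _ ≤ (‖g n t - f t‖ₑ + ‖f t‖ₑ) ^ 2 := pow_le_pow_left' (enorm_add_le _ _) _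
          _ ≤ _ := sq_add_le_enn _ _
    _ = (C : ℝ≥0∞) * (2 * 0 + 2 * ∫⁻ x, ‖f x‖ₑ ^ 2) := by
        refine Filter.Tendsto.liminf_eq ?_
        refine ENNReal.Tendsto.const_mul ?_ (Or.inr ENNReal.coe_ne_top)
        exact (ENNReal.Tendsto.const_mul hg (Or.inr (by norm_num))).add tendsto_const_nhds
    _ = _ := by push_cast; ring

/-- square of the square function -/
noncomputable def SQ {N : ℕ} (φ : ℝ → ℂ) (a b : Fin N → ℝ) (f : ℝ → ℂ) (x : ℝ) : ℝ≥0∞ :=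
  ∑ m, ‖conv f (phim φ (a m) (b m)) x‖ₑ ^ 2

lemma four_rpow (a b c d : ℝ≥0∞) {r : ℝ} (hr : 0 ≤ r) :
    (a + b + c + d) ^ r ≤ 4 ^ r * (a ^ r + b ^ r + c ^ r + d ^ r) := by
  have h1 : a + b + c + d ≤ 4 * max (max a b) (max c d) := by
    have ha : a ≤ max (max a b) (max c d) := by simp
    have hb : b ≤ max (max a b) (max c d) := by simp
    have hc : c ≤ max (max a b) (max c d) := by simp
    have hd : d ≤ max (max a b) (max c d) := by simp
    calc _ ≤ _ := add_le_add (add_le_add (add_le_add ha hb) hc) hd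
      _ = _ := by ring
  refine (ENNReal.rpow_le_rpow h1 hr).trans ?_
  rw [ENNReal.mul_rpow_of_nonneg _ _ hr]
  refine mul_le_mul_right ?_ _
  have hm : Monotone fun x : ℝ≥0∞ => x ^ r := ENNReal.monotone_rpow_of_nonneg hr
  rw [hm.map_max, hm.map_max, hm.map_max]
  refine max_le (max_le ?_ ?_) (max_le ?_ ?_)
  · rw [add_assoc, add_assoc]; exact le_self_add
  · rw [add_comm (a ^ r), add_assoc, add_assoc]; exact le_self_add
  · rw [add_right_comm]; exact le_add_self
  · exact le_add_self

lemma Cls.indicator {f : ℝ → ℂ} (hf : Cls f) {s : Set ℝ} (hs : MeasurableSet s) : Cls (s.indicator f) := by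
  obtain ⟨B, hB⟩ := hf.bdd
  exact ⟨hf.meas.indicator hs, hf.int.indicator hs, B, fun t => (norm_indicator_le_norm_self f t).trans (hB t)⟩

lemma continuous_SQ {N : ℕ} (φ : SchwartzMap ℝ ℂ) {a b : Fin N → ℝ} (hab : ∀ m, a m < b m) {f : ℝ → ℂ} (hf : Cls f) :
    Continuous (SQ φ a b f) := by
  refine continuous_finsetSum _ fun m _ => ?_
  obtain ⟨G, hG, -⟩ := phim_schwartz φ (a m) (b m) (hab m)
  rw [← funext hG]
  exact (ENNReal.continuous_pow 2).comp (continuous_conv hf G).enorm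

lemma bdd_SQ {N : ℕ} (φ : SchwartzMap ℝ ℂ) {a b : Fin N → ℝ} (hab : ∀ m, a m < b m) {f : ℝ → ℂ} (hf : Cls f) :
    ∃ B : ℝ≥0, ∀ x, SQ φ a b f x ≤ B := by
  have : ∀ m, ∃ B : ℝ≥0, ∀ x, ‖conv f (phim φ (a m) (b m)) x‖ₑ ≤ B := by
    intro m
    obtain ⟨G, hG, -⟩ := phim_schwartz φ (a m) (b m) (hab m)
    rw [← funext hG]
    exact (hf.conv G).enn_bdd
  choose B hB using this
  refine ⟨∑ m, B m ^ 2, fun x => ?_⟩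
  push_cast
  exact Finset.sum_le_sum fun m _ => pow_le_pow_left' (hB m x) _

lemma SQ_diff {N : ℕ} (φ : SchwartzMap ℝ ℂ) {a b : Fin N → ℝ} (hab : ∀ m, a m < b m) {f : ℝ → ℂ} (hf : Cls f)
    {s : Set ℝ} (hs : MeasurableSet s) (y y' : ℝ) :
    SQ φ a b f y ≤ 4 * (SQ φ a b (s.indicator f) y + SQ φ a b (s.indicator f) y' + SQ φ a b f y' +
      ∑ m, ‖rotConv φ (a m) (b m) (sᶜ.indicator f) y - rotConv φ (a m) (b m) (sᶜ.indicator f) y'‖ₑ ^ 2) := by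
  simp only [SQ, ← enorm_rotConv]
  rw [← Finset.sum_add_distrib, ← Finset.sum_add_distrib, ← Finset.sum_add_distrib, Finset.mul_sum]
  refine Finset.sum_le_sum fun m _ => ?_
  obtain ⟨G, hG, -⟩ := phim_schwartz φ (a m) (b m) (hab m)
  have hadd : ∀ x, rotConv φ (a m) (b m) f x = rotConv φ (a m) (b m) (s.indicator f) x +
      rotConv φ (a m) (b m) (sᶜ.indicator f) x := by
    intro x
    simp only [rotConv, ← funext hG]
    rw [← mul_add]
    congr 1
    simp only [conv]
    rw [← integral_add ((hf.indicator hs).integrable_mul G x) ((hf.indicator hs.compl).integrable_mul G x)]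
    congr 1; ext t
    rw [← add_mul]; congr 1
    by_cases ht : t ∈ s <;> simp [ht]
  set A := rotConv φ (a m) (b m) (s.indicator f) y
  set B := rotConv φ (a m) (b m) (s.indicator f) y'
  set E := rotConv φ (a m) (b m) f y'
  set D := rotConv φ (a m) (b m) (sᶜ.indicator f) y - rotConv φ (a m) (b m) (sᶜ.indicator f) y' with hD
  have h1 : rotConv φ (a m) (b m) f y = (A - B) + (E + D) := by
    have := hadd y'
    have := hadd y
    simp only [A, B, E, D] at *
    rw [hadd y, hadd y']; ring
  rw [h1]
  calc _ ≤ (‖A - B‖ₑ + ‖E + D‖ₑ) ^ 2 := pow_le_pow_left' (enorm_add_le _ _) _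
    _ ≤ 2 * ‖A - B‖ₑ ^ 2 + 2 * ‖E + D‖ₑ ^ 2 := sq_add_le_enn _ _
    _ ≤ 2 * (‖A‖ₑ + ‖B‖ₑ) ^ 2 + 2 * (‖E‖ₑ + ‖D‖ₑ) ^ 2 := by
        gcongr
        · exact enorm_sub_le
        · exact enorm_add_le _ _
    _ ≤ 2 * (2 * ‖A‖ₑ ^ 2 + 2 * ‖B‖ₑ ^ 2) + 2 * (2 * ‖E‖ₑ ^ 2 + 2 * ‖D‖ₑ ^ 2) := by
        gcongr <;> exact sq_add_le_enn _ _
    _ = _ := by ring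

/-- scalar `L^q` bound hypothesis -/
def HB (φ : SchwartzMap ℝ ℂ) (q : ℝ) (C : ℝ≥0) : Prop :=
  ∀ (N : ℕ) (a b : Fin N → ℝ), (∀ m, a m < b m) →
      (∀ m m', m ≠ m' → Disjoint (Set.Icc (a m) (b m)) (Set.Icc (a m') (b m'))) →
      ∀ f : ℝ → ℂ, Cls f → ∫⁻ x, SQ φ a b f x ^ (q / 2) ≤ C * ∫⁻ x, ‖f x‖ₑ ^ q

theorem thmB_gl (φ : SchwartzMap ℝ ℂ) {q : ℝ} (hq : 2 ≤ q) {Cq : ℝ≥0} (hCq : HB φ q Cq) :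
    ∃ A : ℝ≥0, ∀ (N : ℕ) (a b : Fin N → ℝ), (∀ m, a m < b m) →
      (∀ m m', m ≠ m' → Disjoint (Set.Icc (a m) (b m)) (Set.Icc (a m') (b m'))) →
      ∀ (J : Finset ℤ) (F : ℤ → ℝ → ℂ), (∀ j, Cls (F j)) →
      GLHyp A (fun x => ∑ j ∈ J, SQ φ a b (F j) x ^ (q / 2)) (fun x => ∑ j ∈ J, ‖F j x‖ₑ ^ q) := by
  obtain ⟨C1, hC1⟩ := diff_est_q φ q hq
  obtain ⟨C2, hC2⟩ := weight_MF
  have hq2 : 0 ≤ q / 2 := by linarith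
  set K : ℝ≥0 := 4 ^ (q / 2) * 4 ^ (q / 2) with hK
  refine ⟨K * (1 + C1 * C2) + Cq * 8, ?_⟩
  intro N a b hab hdisj J F hF x d hd
  set A : ℝ≥0 := K * (1 + C1 * C2) + Cq * 8 with hA
  set s := Metric.ball x (4 * d)
  have hs : MeasurableSet s := Metric.isOpen_ball.measurableSet
  set h : ℝ → ℝ≥0∞ := fun x => ∑ j ∈ J, ‖F j x‖ₑ ^ q with hh
  have hhm : Measurable h := Finset.measurable_sum _ fun j _ => (hF j).meas.enorm.pow_const q
  refine ⟨fun y => ∑ j ∈ J, SQ φ a b (s.indicator (F j)) y ^ (q / 2), ?_, ?_, ?_⟩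
  · exact Finset.measurable_sum _ fun j _ =>
      (continuous_SQ φ hab ((hF j).indicator hs)).measurable.pow_const _
  · rw [lintegral_finsetSum _ fun j _ =>
      (continuous_SQ φ hab ((hF j).indicator hs)).measurable.pow_const _]
    calc _ ≤ ∑ j ∈ J, (Cq : ℝ≥0∞) * ∫⁻ t, ‖s.indicator (F j) t‖ₑ ^ q :=
          Finset.sum_le_sum fun j _ => hCq N a b hab hdisj _ ((hF j).indicator hs)
      _ = Cq * ∫⁻ t in s, h t := by
          rw [← Finset.mul_sum, ← lintegral_indicator hs, hh]
          congr 1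
          rw [← lintegral_finsetSum _ fun j _ => ((hF j).indicator hs).meas.enorm.pow_const q]
          refine lintegral_congr fun t => ?_
          by_cases ht : t ∈ s
          · simp [ht]
          · have : 0 < q := by linarith
            simp [ht, this]
      _ ≤ Cq * (ENNReal.ofReal (2 * (4 * d)) * MF h x) :=
          mul_le_mul_right (lintegral_ball_le_MF h (Metric.mem_ball_self (by positivity))) _
      _ = ((Cq * 8 : ℝ≥0) : ℝ≥0∞) * ENNReal.ofReal d * MF h x := by
          rw [show 2 * (4 * d) = 8 * d by ring, ENNReal.ofReal_mul (by norm_num)]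
          push_cast
          rw [show ENNReal.ofReal 8 = 8 by norm_num]
          ring
      _ ≤ A * ENNReal.ofReal d * MF h x := by
          gcongr
          rw [hA]; exact le_add_self
  · intro y hy y' hy'
    set Dj : ℤ → ℝ≥0∞ := fun j => ∑ m, ‖rotConv φ (a m) (b m) (sᶜ.indicator (F j)) y -
      rotConv φ (a m) (b m) (sᶜ.indicator (F j)) y'‖ₑ ^ 2 with hDj
    have hD : ∑ j ∈ J, Dj j ^ (q / 2) ≤ (C1 * C2 : ℝ≥0) * MF h x := by
      calc _ ≤ ∑ j ∈ J, (C1 : ℝ≥0∞) * ∫⁻ t, ‖F j t‖ₑ ^ q * Wt x d t := by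
            refine Finset.sum_le_sum fun j _ => ?_
            refine (hC1 N a b hab hdisj _ ((hF j).indicator hs.compl) x d y y' hd ?_ hy hy').trans ?_
            · intro t ht
              have : t ∈ s := by rw [Metric.mem_ball, Real.dist_eq]; exact ht
              simp [this]
            · refine mul_le_mul_right (lintegral_mono fun t => ?_) _
              refine mul_le_mul_left (ENNReal.rpow_le_rpow ?_ (by linarith)) _
              exact enorm_indicator_le_enorm_self _ _
        _ = C1 * ∫⁻ t, h t * Wt x d t := by
            rw [← Finset.mul_sum]
            simp_rw [hh, Finset.sum_mul]
            rw [lintegral_finsetSum]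
            intro j _
            exact ((hF j).meas.enorm.pow_const q).mul (measurable_Wt _ _)
        _ ≤ C1 * (C2 * MF h x) := mul_le_mul_right (hC2 h hhm x d hd) _
        _ = _ := by push_cast; ring
    have hpt : ∀ j, SQ φ a b (F j) y ^ (q / 2) ≤ K * (SQ φ a b (s.indicator (F j)) y ^ (q / 2) +
        SQ φ a b (s.indicator (F j)) y' ^ (q / 2) + SQ φ a b (F j) y' ^ (q / 2) + Dj j ^ (q / 2)) := by
      intro j
      refine (ENNReal.rpow_le_rpow (SQ_diff φ hab (hF j) hs y y') hq2).trans ?_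
      rw [ENNReal.mul_rpow_of_nonneg _ _ hq2]
      refine (mul_le_mul_right (four_rpow _ _ _ _ hq2) _).trans_eq ?_
      rw [hK, ENNReal.coe_mul, ENNReal.coe_rpow_of_nonneg _ hq2]
      push_cast
      ring
    calc _ ≤ ∑ j ∈ J, (K : ℝ≥0∞) * (SQ φ a b (s.indicator (F j)) y ^ (q / 2) +
        SQ φ a b (s.indicator (F j)) y' ^ (q / 2) + SQ φ a b (F j) y' ^ (q / 2) + Dj j ^ (q / 2)) :=
          Finset.sum_le_sum fun j _ => hpt j
      _ = K * (∑ j ∈ J, SQ φ a b (s.indicator (F j)) y ^ (q / 2) +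
        ∑ j ∈ J, SQ φ a b (s.indicator (F j)) y' ^ (q / 2) + ∑ j ∈ J, SQ φ a b (F j) y' ^ (q / 2)
          + ∑ j ∈ J, Dj j ^ (q / 2)) := by
          rw [← Finset.mul_sum]; simp only [Finset.sum_add_distrib]
      _ ≤ K * ((1 + C1 * C2 : ℝ≥0) * (∑ j ∈ J, SQ φ a b (s.indicator (F j)) y ^ (q / 2) +
        ∑ j ∈ J, SQ φ a b (s.indicator (F j)) y' ^ (q / 2) + ∑ j ∈ J, SQ φ a b (F j) y' ^ (q / 2)
          + MF h x)) := by
          refine mul_le_mul_right ?_ _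
          rw [mul_add]
          refine add_le_add ?_ (hD.trans ?_)
          · refine le_mul_of_one_le_left zero_le ?_
            push_cast; exact le_self_add
          · refine mul_le_mul_left ?_ _
            push_cast; exact le_add_self
      _ ≤ _ := by
          rw [← mul_assoc]
          refine mul_le_mul_left ?_ _
          rw [hA, ← ENNReal.coe_mul]
          exact_mod_cast le_self_add

theorem thmB (φ : SchwartzMap ℝ ℂ) {q : ℝ} (hq : 2 ≤ q) {Cq : ℝ≥0} (hCq : HB φ q Cq) {r : ℝ} (hr : 1 ≤ r) :
    ∃ C : ℝ≥0, ∀ (N : ℕ) (a b : Fin N → ℝ), (∀ m, a m < b m) →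
      (∀ m m', m ≠ m' → Disjoint (Set.Icc (a m) (b m)) (Set.Icc (a m') (b m'))) →
      ∀ (J : Finset ℤ) (F : ℤ → ℝ → ℂ), (∀ j, Cls (F j)) →
      ∫⁻ x, (∑ j ∈ J, SQ φ a b (F j) x ^ (q / 2)) ^ r ≤ C * ∫⁻ x, (∑ j ∈ J, ‖F j x‖ₑ ^ q) ^ r := by
  have hq2 : 0 ≤ q / 2 := by linarith
  have h1 : ∀ (N : ℕ) (a b : Fin N → ℝ), (∀ m, a m < b m) →
      (∀ m m', m ≠ m' → Disjoint (Set.Icc (a m) (b m)) (Set.Icc (a m') (b m'))) →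
      ∀ (J : Finset ℤ) (F : ℤ → ℝ → ℂ), (∀ j, Cls (F j)) →
      ∫⁻ x, (∑ j ∈ J, SQ φ a b (F j) x ^ (q / 2)) ≤ Cq * ∫⁻ x, (∑ j ∈ J, ‖F j x‖ₑ ^ q) := by
    intro N a b hab hdisj J F hF
    rw [lintegral_finsetSum _ fun j _ => (continuous_SQ φ hab (hF j)).measurable.pow_const _,
      lintegral_finsetSum _ fun j _ => (hF j).meas.enorm.pow_const q, Finset.mul_sum]
    exact Finset.sum_le_sum fun j _ => hCq N a b hab hdisj _ (hF j)
  rcases hr.eq_or_lt with rfl | hr1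
  · refine ⟨Cq, ?_⟩
    simpa only [ENNReal.rpow_one] using h1
  obtain ⟨A, hA⟩ := thmB_gl φ hq hCq
  obtain ⟨C, hC, hgl⟩ := good_lambda A hr1
  refine ⟨C.toNNReal, ?_⟩
  intro N a b hab hdisj J F hF
  rw [ENNReal.coe_toNNReal hC]
  refine hgl _ _ ?_ ?_ ?_ ?_ ?_ (hA N a b hab hdisj J F hF)
  · refine continuous_finsetSum _ fun j _ => ?_
    exact ENNReal.continuous_rpow_const.comp (continuous_SQ φ hab (hF j))
  · exact Finset.measurable_sum _ fun j _ => (hF j).meas.enorm.pow_const q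
  · choose B hB using fun j => bdd_SQ φ hab (hF j)
    refine ⟨∑ j ∈ J, (B j : ℝ≥0∞) ^ (q / 2), ?_, fun x => Finset.sum_le_sum fun j _ =>
      ENNReal.rpow_le_rpow (hB j x) hq2⟩
    exact ENNReal.sum_ne_top.2 fun j _ => ENNReal.rpow_ne_top_of_nonneg hq2 ENNReal.coe_ne_top
  · choose B hB using fun j => (hF j).enn_bdd
    refine ⟨∑ j ∈ J, (B j : ℝ≥0∞) ^ q, ?_, fun x => Finset.sum_le_sum fun j _ =>
      ENNReal.rpow_le_rpow (hB j x) (by linarith)⟩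
    exact ENNReal.sum_ne_top.2 fun j _ => ENNReal.rpow_ne_top_of_nonneg (by linarith) ENNReal.coe_ne_top
  · refine ne_top_of_le_ne_top ?_ (h1 N a b hab hdisj J F hF)
    refine ENNReal.mul_ne_top ENNReal.coe_ne_top ?_
    rw [lintegral_finsetSum _ fun j _ => (hF j).meas.enorm.pow_const q]
    exact ENNReal.sum_ne_top.2 fun j _ => (hF j).lint (by linarith)

theorem thmC (φ : SchwartzMap ℝ ℂ) (hφ : Function.support (𝓕 ⇑φ) ⊆ Set.Ioo 0 1) {q : ℝ} (hq : 2 ≤ q) :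
    ∃ C : ℝ≥0, HB φ q C := by
  obtain ⟨C2, hC2⟩ := L2_cls φ hφ
  have h2 : HB φ 2 C2 := by
    intro N a b hab hdisj f hf
    have := hC2 N a b hab hdisj f hf
    simpa [SQ] using this
  obtain ⟨C, hC⟩ := thmB φ le_rfl h2 (r := q / 2) (by linarith)
  refine ⟨C, ?_⟩
  intro N a b hab hdisj f hf
  have := hC N a b hab hdisj {0} (fun _ => f) (fun _ => hf)
  simp only [Finset.sum_singleton, ← ENNReal.rpow_mul] at this
  rw [show (2 / 2 : ℝ) * (q / 2) = q / 2 by ring, show (2 : ℝ) * (q / 2) = q by ring] at this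
  exact this

lemma psi_schwartz (Φ : SchwartzMap ℝ ℂ) (j : ℤ) : ∃ G : SchwartzMap ℝ ℂ, ∀ x, G x = psi Φ j x := by
  obtain ⟨G1, h1, -⟩ := phim_schwartz Φ 0 ((2:ℝ) ^ j) (by positivity)
  obtain ⟨G2, h2, -⟩ := phim_schwartz Φ 0 ((2:ℝ) ^ (j - 1)) (by positivity)
  refine ⟨G1 - G2, fun x => ?_⟩
  rw [sub_apply, h1, h2, psi, phim, phim]
  simp [e2pi]

lemma conv_comm3 (f G P : SchwartzMap ℝ ℂ) (x : ℝ) : conv (conv f G) P x = conv (conv f P) G x := by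
  obtain ⟨H1, h1, k1⟩ := conv_schwartz f G
  obtain ⟨H2, h2, k2⟩ := conv_schwartz f P
  obtain ⟨H3, h3, k3⟩ := conv_schwartz H1 P
  obtain ⟨H4, h4, k4⟩ := conv_schwartz H2 G
  rw [← funext h1, ← funext h2, ← h3, ← h4]
  have : 𝓕 H3 = 𝓕 H4 := by
    ext ξ
    rw [k3, k4, k1, k2]; ring
  rw [← FourierTransform.fourierInv_fourier_eq (F := SchwartzMap ℝ ℂ) H3, this,
    FourierTransform.fourierInv_fourier_eq]

lemma conv_const_mul (c : ℂ) (f g : ℝ → ℂ) (x : ℝ) : conv (fun t => c * f t) g x = c * conv f g x := by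
  simp only [conv, mul_assoc]
  exact integral_const_mul _ _

lemma Cls.const_mul {f : ℝ → ℂ} (hf : Cls f) (c : ℂ) : Cls (fun t => c * f t) := by
  obtain ⟨B, hB⟩ := hf.bdd
  refine ⟨hf.meas.const_mul c, hf.int.const_mul c, ‖c‖ * B, fun t => ?_⟩
  rw [norm_mul]
  exact mul_le_mul_of_nonneg_left (hB t) (norm_nonneg _)

lemma half_rpow (c X : ℝ≥0∞) {q : ℝ} (hq0 : 0 ≤ q) : (c * X ^ (1 / 2 : ℝ)) ^ q = (c ^ 2 * X) ^ (q / 2) := by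
  rw [ENNReal.mul_rpow_of_nonneg _ _ hq0, ENNReal.mul_rpow_of_nonneg _ _ (by positivity),
      ← ENNReal.rpow_mul, ← ENNReal.rpow_two, ← ENNReal.rpow_mul c, show (2 : ℝ) * (q / 2) = q by ring,
      show (1 / 2 : ℝ) * q = q / 2 by ring]

lemma lintegral_tsum_rpow_le {r : ℝ} (hr : 0 < r) (T U : ℤ → ℝ → ℝ≥0∞) (hT : ∀ j, Measurable (T j)) (C : ℝ≥0∞)
    (h : ∀ J : Finset ℤ, ∫⁻ x, (∑ j ∈ J, T j x) ^ r ≤ C * ∫⁻ x, (∑ j ∈ J, U j x) ^ r) :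
    ∫⁻ x, (∑' j, T j x) ^ r ≤ C * ∫⁻ x, (∑' j, U j x) ^ r := by
  have hs : ∀ t : Finset ℤ, ∃ n : ℕ, t ⊆ Finset.Icc (-(n : ℤ)) n := by
    intro t
    refine ⟨t.sup Int.natAbs, fun j hj => ?_⟩
    have : j.natAbs ≤ t.sup Int.natAbs := Finset.le_sup (f := Int.natAbs) hj
    rw [Finset.mem_Icc]; omega
  have e1 : ∀ x, (∑' j, T j x) ^ r = ⨆ n : ℕ, (∑ j ∈ Finset.Icc (-(n : ℤ)) n, T j x) ^ r := by
    intro x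
    rw [ENNReal.tsum_eq_iSup_sum' _ hs]
    exact (ENNReal.orderIsoRpow r hr).map_iSup _
  simp_rw [e1]
  rw [lintegral_iSup]
  · refine iSup_le fun n => (h _).trans ?_
    refine mul_le_mul_right (lintegral_mono fun x => ?_) _
    exact ENNReal.rpow_le_rpow (ENNReal.sum_le_tsum _) hr.le
  · intro n
    exact (Finset.measurable_sum _ fun j _ => hT j).pow_const r
  · intro n n' hn x
    refine ENNReal.rpow_le_rpow (Finset.sum_le_sum_of_subset ?_) hr.le
    refine Finset.Icc_subset_Icc ?_ ?_ <;> omega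

/-- uniform boundedness of the Rubio de Francia family WITHOUT rotations on the
homogeneous Triebel–Lizorkin space `Ḟ^s_{pq}`, for `2 ≤ q ≤ p < ∞` and `s ≥ 0`. -/
theorem statement8 (φ Φ : SchwartzMap ℝ ℂ)
    (hφ : Function.support (𝓕 ⇑φ) ⊆ Set.Ioo 0 1)
    (hΦsupp : Function.support (𝓕 ⇑Φ) ⊆ Set.Icc (-2) 2)
    (hΦone : ∀ ξ ∈ Set.Icc (-1:ℝ) 1, 𝓕 ⇑Φ ξ = 1)
    (p q s : ℝ) (hq : 2 ≤ q) (hqp : q ≤ p) (hs : 0 ≤ s) :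
    ∃ C : ℝ, 0 < C ∧ ∀ (N : ℕ) (a b : Fin N → ℝ), Admissible a b →
      ∀ f : SchwartzMap ℝ ℂ,
        (∫⁻ x : ℝ, ((∑' j : ℤ,
            ((2 : ℝ≥0∞) ^ ((j : ℝ) * s) *
              (∑ m : Fin N,
                (‖conv (conv ⇑f (phim ⇑φ (a m) (b m))) (psi ⇑Φ j) x‖₊ : ℝ≥0∞) ^ 2)
                  ^ (1/2 : ℝ)) ^ q) ^ (1/q)) ^ p) ^ (1/p)
        ≤ ENNReal.ofReal C *
          (∫⁻ x : ℝ, ((∑' j : ℤ,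
              ((2 : ℝ≥0∞) ^ ((j : ℝ) * s) *
                (‖conv ⇑f (psi ⇑Φ j) x‖₊ : ℝ≥0∞)) ^ q) ^ (1/q)) ^ p) ^ (1/p) := by
  have hq0 : 0 < q := by linarith
  have hp0 : 0 < p := by linarith
  obtain ⟨Cq, hCq⟩ := thmC φ hφ hq
  obtain ⟨C, hC⟩ := thmB φ hq hCq (r := p / q) ((one_le_div hq0).2 hqp)
  refine ⟨((C : ℝ) ^ (1 / p)) + 1, by positivity, ?_⟩
  rintro N a b ⟨hab, -, hdisj⟩ f
  choose P hP using psi_schwartz Φ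
  choose G hG _ using fun m => phim_schwartz φ (a m) (b m) (hab m)
  have hP' : ∀ j, psi Φ j = P j := fun j => (funext (hP j)).symm
  have hG' : ∀ m, phim φ (a m) (b m) = G m := fun m => (funext (hG m)).symm
  let F : ℤ → ℝ → ℂ := fun j t => (((2:ℝ) ^ ((j : ℝ) * s) : ℝ) : ℂ) * conv f (P j) t
  have hF : ∀ j, Cls (F j) := fun j => ((Cls.schwartz f).conv (P j)).const_mul _
  have hc : ∀ j : ℤ, ‖(((2:ℝ) ^ ((j : ℝ) * s) : ℝ) : ℂ)‖ₑ = (2 : ℝ≥0∞) ^ ((j : ℝ) * s) := by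
    intro j
    rw [← ofReal_norm, Complex.norm_real, Real.norm_of_nonneg (by positivity),
      ← ENNReal.ofReal_rpow_of_pos (by norm_num)]
    norm_num
  have e1 : ∀ x (j : ℤ), ((2 : ℝ≥0∞) ^ ((j : ℝ) * s) * (∑ m : Fin N,
      (‖conv (conv ⇑f (phim ⇑φ (a m) (b m))) (psi ⇑Φ j) x‖₊ : ℝ≥0∞) ^ 2) ^ (1/2 : ℝ)) ^ q
      = SQ φ a b (F j) x ^ (q / 2) := by
    intro x j
    have : SQ φ a b (F j) x = ((2 : ℝ≥0∞) ^ ((j : ℝ) * s)) ^ 2 * (∑ m : Fin N,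
      (‖conv (conv ⇑f (phim ⇑φ (a m) (b m))) (psi ⇑Φ j) x‖₊ : ℝ≥0∞) ^ 2) := by
      rw [SQ, Finset.mul_sum]
      refine Finset.sum_congr rfl fun m _ => ?_
      rw [conv_const_mul, enorm_mul, hc, mul_pow, hG', hP', conv_comm3]
      rfl
    rw [this, half_rpow _ _ hq0.le]
  have e2 : ∀ x (j : ℤ), ((2 : ℝ≥0∞) ^ ((j : ℝ) * s) * (‖conv ⇑f (psi ⇑Φ j) x‖₊ : ℝ≥0∞)) ^ q = ‖F j x‖ₑ ^ q := by
    intro x j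
    simp only [F]
    rw [enorm_mul, hc, hP']
    rfl
  have e3 : ∀ X : ℝ≥0∞, (X ^ (1 / q)) ^ p = X ^ (p / q) := by
    intro X
    rw [← ENNReal.rpow_mul]; congr 1; ring
  simp_rw [e1, e2, e3]
  have key := lintegral_tsum_rpow_le (r := p / q) (by positivity) (fun j x => SQ φ a b (F j) x ^ (q / 2))
    (fun j x => ‖F j x‖ₑ ^ q) (fun j => (continuous_SQ φ hab (hF j)).measurable.pow_const _) C
    (fun J => hC N a b hab hdisj J F hF)
  refine (ENNReal.rpow_le_rpow key (by positivity)).trans ?_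
  rw [ENNReal.mul_rpow_of_nonneg _ _ (by positivity)]
  refine mul_le_mul_left ?_ _
  rw [← ENNReal.ofReal_coe_nnreal, ENNReal.ofReal_rpow_of_nonneg C.coe_nonneg (by positivity)]
  exact ENNReal.ofReal_le_ofReal (by simp)
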